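/- Let Ω ⊂ ℝ^n be open, let Q = (Q^{ij}_{αβ}) (i, j = 1, …, n; α, β = 1, …, N) be a constant coefficient tensor satisfying |Q^{ij}_{αβ}| ≤ L for all indices and the strong Legendre–Hadamard condition Σ_{i,j,α,β} Q^{ij}_{αβ} λ_i λ_j μ^α μ^β ≥ ℓ |λ|² |μ|² for all λ ∈ ℝ^n, μ ∈ ℝ^N, for some constants 0 < ℓ ≤ L. Let v : Ω → ℝ^N be locally integrable and suppose that for every φ ∈ C_c^∞(Ω; ℝ^N) one has ∫_Ω Σ_{i,j,α,β} v^α(x) Q^{ij}_{αβ} ∂_i ∂_j φ^β(x) dx = 0 (the weak formulation of Σ Q^{ij}_{αβ} D_i v^α D_j φ^β = 0, written after a further integration by parts). Then there exists a smooth function ṽ : Ω → ℝ^N with v = ṽ almost everywhere in Ω, and there exists a constant c = c(n, N, ℓ, L) > 0 such that for every ball B_R(x₀) with closure contained in Ω one has sup_{B_{R/2}(x₀)} |Dṽ| ≤ (c / R^n) ∫_{B_R(x₀)} |Dṽ(x)| dx. -/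

import Mathlib

open MeasureTheory Metric

/-!
Let `X̂` be a smooth cutoff equal to `1` near the origin and `X m` the dilation of `X` by `2 ^ m`
with unit mass. The Fourier transform of `X (m + 1) - X m` lives on an annulus, where the symbol of
the system is invertible, so `X (m + 1) - X m` is the image of a Schwartz function under the
operator; cutting that function off to the unit ball costs an error that decays geometrically in
`m`, together with all derivatives. Telescoping, `η (X m - X 0)` is, for a cutoff `η`, the image of
a test map up to a smooth remainder which converges to a smooth compactly supported kernel. Testing
the equation with translates and letting `m → ∞` gives `v = K ⋆ v` almost everywhere, at every
scale. Hence `v` is smooth, and differentiating `v = K ⋆ v` on the right bounds `Dv` by its mean.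
All bounds are uniform in the coefficients because these range over a compact set.
-/

open scoped ContDiff SchwartzMap FourierTransform LineDeriv

lemma lineDerivOp_postcompCLM {V W W' : Type*} [NormedAddCommGroup V] [NormedSpace ℝ V]
    [NormedAddCommGroup W] [NormedSpace ℝ W] [NormedAddCommGroup W'] [NormedSpace ℝ W']
    (Λ : W →L[ℝ] W') (f : 𝓢(V, W)) (v : V) :
    ∂_{v} (f.postcompCLM Λ) = (∂_{v} f).postcompCLM Λ := by
  ext z
  have h : HasFDerivAt (f.postcompCLM Λ) (Λ ∘L fderiv ℝ f z) z :=
    Λ.hasFDerivAt.comp z (f.hasFDerivAt z)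
  rw [SchwartzMap.lineDerivOp_apply_eq_fderiv, h.fderiv, SchwartzMap.postcompCLM_apply,
    SchwartzMap.lineDerivOp_apply_eq_fderiv, ContinuousLinearMap.comp_apply]

section CosineTransform

variable {V W W' : Type*} [NormedAddCommGroup V] [InnerProductSpace ℝ V] [FiniteDimensional ℝ V]
  [MeasurableSpace V] [BorelSpace V]
  [NormedAddCommGroup W] [NormedSpace ℝ W] [FiniteDimensional ℝ W]
  [NormedAddCommGroup W'] [NormedSpace ℝ W'] [FiniteDimensional ℝ W']

/-- The coordinates of a real vector, viewed as complex numbers. Together with `realPartVector` it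
transports the complex Fourier transform to functions with values in a real space. -/
noncomputable def complexCoordinates (W : Type*) [NormedAddCommGroup W] [NormedSpace ℝ W]
    [FiniteDimensional ℝ W] : W →L[ℝ] (Fin (Module.finrank ℝ W) → ℂ) :=
  ContinuousLinearMap.pi fun i =>
    Complex.ofRealCLM ∘L ((Module.finBasis ℝ W).coord i).toContinuousLinearMap

/-- The vector whose coordinates are the real parts of the given complex numbers. -/
noncomputable def realPartVector (W : Type*) [NormedAddCommGroup W] [NormedSpace ℝ W]
    [FiniteDimensional ℝ W] : (Fin (Module.finrank ℝ W) → ℂ) →L[ℝ] W :=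
  ∑ i, (Complex.reCLM ∘L ContinuousLinearMap.proj i).smulRight (Module.finBasis ℝ W i)

lemma realPartVector_smul_complexCoordinates (c : ℂ) (w : W) :
    realPartVector W (c • complexCoordinates W w) = c.re • w := by
  conv_rhs => rw [← (Module.finBasis ℝ W).sum_repr w, Finset.smul_sum]
  simp [realPartVector, complexCoordinates, mul_smul]

/-- The transform `f ↦ ∫ cos (2π⟪ξ, ·⟫) f ξ dξ`, the real part of the inverse Fourier transform, on
Schwartz functions with values in a finite-dimensional real space. -/
noncomputable def cosineTransform (V W : Type*) [NormedAddCommGroup V] [InnerProductSpace ℝ V]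
    [FiniteDimensional ℝ V] [MeasurableSpace V] [BorelSpace V]
    [NormedAddCommGroup W] [NormedSpace ℝ W] [FiniteDimensional ℝ W] : 𝓢(V, W) →L[ℝ] 𝓢(V, W) :=
  SchwartzMap.postcompCLM (realPartVector W) ∘L
    FourierTransform.fourierInvCLM ℝ 𝓢(V, Fin (Module.finrank ℝ W) → ℂ) ∘L
      SchwartzMap.postcompCLM (complexCoordinates W)

lemma cosineTransform_apply_eq_realPartVector (f : 𝓢(V, W)) (z : V) :
    cosineTransform V W f z =
      realPartVector W (𝓕⁻ (SchwartzMap.postcompCLM (complexCoordinates W) f) z) := rfl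

lemma cosineTransform_apply (f : 𝓢(V, W)) (z : V) :
    cosineTransform V W f z = ∫ ξ, Real.cos (2 * Real.pi * inner ℝ ξ z) • f ξ := by
  rw [cosineTransform_apply_eq_realPartVector, SchwartzMap.fourierInv_coe, Real.fourierInv_eq,
    ← ContinuousLinearMap.integral_comp_comm]
  · refine integral_congr_ae (.of_forall fun ξ => ?_)
    beta_reduce
    rw [Circle.smul_def, SchwartzMap.postcompCLM_apply, realPartVector_smul_complexCoordinates,
      Real.fourierChar_apply, Complex.exp_ofReal_mul_I_re]
  · simpa using (Real.fourierIntegral_convergent_iff (-z)).2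
      (f.postcompCLM (complexCoordinates W)).integrable

lemma cosineTransform_postcompCLM (Λ : W →L[ℝ] W') (f : 𝓢(V, W)) :
    cosineTransform V W' (f.postcompCLM Λ) = (cosineTransform V W f).postcompCLM Λ := by
  ext z
  have hint : Integrable fun ξ => Real.cos (2 * Real.pi * inner ℝ ξ z) • f ξ :=
    f.integrable.bdd_smul 1 (by fun_prop) (.of_forall fun ξ => Real.abs_cos_le_one _)
  rw [SchwartzMap.postcompCLM_apply, cosineTransform_apply, cosineTransform_apply,
    ← Λ.integral_comp_comm hint]
  simp

lemma cosineTransform_comp_inv_smul (f g : 𝓢(V, W)) {t : ℝ} (ht : 0 < t)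
    (h : ∀ ξ, g ξ = f (t⁻¹ • ξ)) (z : V) :
    cosineTransform V W g z = t ^ Module.finrank ℝ V • cosineTransform V W f (t • z) := by
  have hvar := Measure.integral_comp_inv_smul (volume : Measure V)
    (fun ξ => Real.cos (2 * Real.pi * inner ℝ ξ (t • z)) • f ξ) t
  rw [abs_of_pos (by positivity)] at hvar
  rw [cosineTransform_apply, cosineTransform_apply, ← hvar]
  refine integral_congr_ae (.of_forall fun ξ => ?_)
  simp [h, real_inner_smul_left, real_inner_smul_right, ht.ne']

lemma integral_cosineTransform (f : 𝓢(V, W)) : ∫ z, cosineTransform V W f z = f 0 := by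
  let F : 𝓢(V, Fin (Module.finrank ℝ W) → ℂ) := f.postcompCLM (complexCoordinates W)
  have hF : ∫ z, 𝓕⁻ F z = F 0 := by
    rw [← show 𝓕 (𝓕⁻ F) = F from FourierTransform.fourier_fourierInv_eq F]
    simp only [SchwartzMap.fourier_coe (𝓕⁻ F), Real.fourier_eq]
    simp
  simp only [cosineTransform_apply_eq_realPartVector]
  rw [ContinuousLinearMap.integral_comp_comm _ (SchwartzMap.integrable _), hF]
  simpa [F] using realPartVector_smul_complexCoordinates 1 (f 0)

lemma lineDerivOp_lineDerivOp_cosineTransform (f : 𝓢(V, W)) (v w : V) :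
    ∂_{w} (∂_{v} (cosineTransform V W f)) = cosineTransform V W (SchwartzMap.smulLeftCLM W
      (fun ξ => -(4 * Real.pi ^ 2) * (inner ℝ ξ v * inner ℝ ξ w)) f) := by
  have hv (v : V) : (inner ℝ · v).HasTemperateGrowth := by fun_prop
  have hvw : (fun ξ : V =>
      -(4 * Real.pi ^ 2) * (inner ℝ ξ v * inner ℝ ξ w)).HasTemperateGrowth := by fun_prop
  simp only [cosineTransform, ContinuousLinearMap.comp_apply, lineDerivOp_postcompCLM,
    FourierTransform.fourierInvCLM_apply, SchwartzMap.lineDerivOp_fourierInv_eq]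
  congr 2
  ext ξ i
  simp only [smul_apply, SchwartzMap.smulLeftCLM_apply_apply (hv _),
    SchwartzMap.smulLeftCLM_apply_apply hvw, SchwartzMap.postcompCLM_apply, map_smul, Pi.smul_apply,
    smul_eq_mul, Complex.real_smul]
  push_cast
  linear_combination 4 * Real.pi ^ 2 * inner ℝ ξ v * inner ℝ ξ w *
    complexCoordinates W (f ξ) i * Complex.I_sq

end CosineTransform

section GeometricDecay

variable {A E W W' ι : Type*} [NormedAddCommGroup A] [NormedSpace ℝ A] [NormedAddCommGroup E]
  [NormedSpace ℝ E] [NormedAddCommGroup W] [NormedSpace ℝ W] [NormedAddCommGroup W']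
  [NormedSpace ℝ W']

/-- Sequences `f i 0, f i 1, …` of smooth maps each of whose derivatives is `O(2⁻ᵐ)` on `S`,
uniformly in `i`. -/
structure GeometricallySmallOn (S : Set E) (f : ι → ℕ → E → W) : Prop where
  contDiff : ∀ i m, ContDiff ℝ ∞ (f i m)
  norm_iteratedFDeriv_le : ∀ k, ∃ C, ∀ i m, ∀ z ∈ S,
    ‖iteratedFDeriv ℝ k (f i m) z‖ ≤ C * (1 / 2) ^ m

namespace GeometricallySmallOn

variable {S : Set E} {f g : ι → ℕ → E → W}

lemma sub (hf : GeometricallySmallOn S f) (hg : GeometricallySmallOn S g) :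
    GeometricallySmallOn S fun i m z => f i m z - g i m z where
  contDiff i m := (hf.contDiff i m).sub (hg.contDiff i m)
  norm_iteratedFDeriv_le k := by
    obtain ⟨C, hC⟩ := hf.norm_iteratedFDeriv_le k
    obtain ⟨C', hC'⟩ := hg.norm_iteratedFDeriv_le k
    refine ⟨C + C', fun i m z hz => ?_⟩
    have hk {f : ℕ → E → W} (h : ContDiff ℝ ∞ (f m)) : ContDiffAt ℝ k (f m) z :=
      (h.of_le (by exact_mod_cast le_top)).contDiffAt
    rw [fun_iteratedFDeriv_sub_apply (hk (hf.contDiff i m)) (hk (hg.contDiff i m)), add_mul]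
    exact (norm_sub_le _ _).trans (add_le_add (hC i m z hz) (hC' i m z hz))

lemma fderiv (hf : GeometricallySmallOn S f) :
    GeometricallySmallOn S fun i m => fderiv ℝ (f i m) where
  contDiff i m := (hf.contDiff i m).fderiv_right (by simp)
  norm_iteratedFDeriv_le k := by
    simpa only [norm_iteratedFDeriv_fderiv] using hf.norm_iteratedFDeriv_le (k + 1)

lemma clm_apply (hf : GeometricallySmallOn S f) (B : A →L[ℝ] W →L[ℝ] W') {a : ι → A} {M : ℝ}
    (ha : ∀ i, ‖a i‖ ≤ M) : GeometricallySmallOn S fun i m z => B (a i) (f i m z) where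
  contDiff i m := (B (a i)).contDiff.comp (hf.contDiff i m)
  norm_iteratedFDeriv_le k := by
    obtain ⟨C, hC⟩ := hf.norm_iteratedFDeriv_le k
    refine ⟨‖B‖ * M * C, fun i m z hz => ?_⟩
    have hB : ‖B (a i)‖ ≤ ‖B‖ * M := (B.le_opNorm _).trans (by gcongr; exact ha i)
    calc ‖iteratedFDeriv ℝ k (B (a i) ∘ f i m) z‖
        ≤ ‖B (a i)‖ * ‖iteratedFDeriv ℝ k (f i m) z‖ :=
          (B (a i)).norm_iteratedFDeriv_comp_left (hf.contDiff i m).contDiffAt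
            (by exact_mod_cast le_top)
      _ ≤ ‖B‖ * M * (C * (1 / 2) ^ m) :=
          mul_le_mul hB (hC i m z hz) (norm_nonneg _) ((norm_nonneg _).trans hB)
      _ = ‖B‖ * M * C * (1 / 2) ^ m := by ring

lemma smul_left (hf : GeometricallySmallOn S f) {η : E → ℝ} (hη : ContDiff ℝ ∞ η)
    (hη_supp : HasCompactSupport η) : GeometricallySmallOn S fun i m z => η z • f i m z where
  contDiff i m := hη.smul (hf.contDiff i m)
  norm_iteratedFDeriv_le k := by
    choose C hC using hf.norm_iteratedFDeriv_le
    have hη_bound (j : ℕ) : ∃ B, ∀ z, ‖iteratedFDeriv ℝ j η z‖ ≤ B :=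
      (hη_supp.iteratedFDeriv j).exists_bound_of_continuous
        (hη.continuous_iteratedFDeriv (by exact_mod_cast le_top))
    choose B hB using hη_bound
    refine ⟨∑ j ∈ Finset.range (k + 1), k.choose j * B j * C (k - j), fun i m z hz => ?_⟩
    rw [Finset.sum_mul]
    refine (norm_iteratedFDeriv_smul_le hη (hf.contDiff i m) z (by exact_mod_cast le_top)).trans
      (Finset.sum_le_sum fun j _ => ?_)
    have hB_nonneg : 0 ≤ B j := (norm_nonneg _).trans (hB j z)
    rw [mul_assoc _ (C _)]
    gcongr
    exacts [hB j z, hC _ i m z hz]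

lemma of_eventuallyEq_zero (hf : GeometricallySmallOn S f)
    (hS : ∀ i m, ∀ z ∉ S, f i m =ᶠ[nhds z] 0) : GeometricallySmallOn Set.univ f where
  contDiff := hf.contDiff
  norm_iteratedFDeriv_le k := by
    obtain ⟨C, hC⟩ := hf.norm_iteratedFDeriv_le k
    refine ⟨max C 0, fun i m z _ => ?_⟩
    by_cases hz : z ∈ S
    · exact (hC i m z hz).trans (by gcongr; exact le_max_left _ _)
    · rw [(Filter.EventuallyEq.iteratedFDeriv ℝ (hS i m z hz) k).eq_of_nhds, Pi.zero_def,
        iteratedFDeriv_fun_zero]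
      simp only [Pi.zero_apply, norm_zero]
      positivity

lemma exists_norm_le (hf : GeometricallySmallOn Set.univ f) :
    ∃ C, ∀ i m z, ‖f i m z‖ ≤ C * (1 / 2) ^ m := by
  simpa using hf.norm_iteratedFDeriv_le 0

lemma exists_norm_sum_range_le (hf : GeometricallySmallOn Set.univ f) :
    ∃ C, ∀ i M z, ‖∑ m ∈ Finset.range M, f i m z‖ ≤ C := by
  obtain ⟨C, hC⟩ := hf.exists_norm_le
  refine ⟨2 * max C 0, fun i M z => ?_⟩
  calc ‖∑ m ∈ Finset.range M, f i m z‖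
      ≤ ∑ m ∈ Finset.range M, max C 0 * (1 / 2 : ℝ) ^ m :=
        norm_sum_le_of_le _ fun m _ => (hC i m z).trans (by gcongr; exact le_max_left _ _)
    _ ≤ max C 0 * 2 := by
        rw [← Finset.mul_sum]
        gcongr
        exact sum_geometric_two_le M
    _ = 2 * max C 0 := mul_comm _ _

variable [CompleteSpace W]

lemma summable (hf : GeometricallySmallOn Set.univ f) (i : ι) (z : E) :
    Summable fun m => f i m z := by
  obtain ⟨C, hC⟩ := hf.exists_norm_le
  exact .of_norm_bounded (summable_geometric_two.mul_left C) fun m => hC i m z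

lemma contDiff_tsum (hf : GeometricallySmallOn Set.univ f) (i : ι) :
    ContDiff ℝ ∞ fun z => ∑' m, f i m z := by
  choose C hC using hf.norm_iteratedFDeriv_le
  exact _root_.contDiff_tsum (hf.contDiff i)
    (fun k _ => summable_geometric_two.mul_left (C k)) fun k m z _ => hC k i m z (Set.mem_univ z)

end GeometricallySmallOn

open Bornology in
lemma geometricallySmallOn_dilation {P : ι → 𝓢(E, W)}
    (hP : IsVonNBounded ℝ (Set.range P)) {c : ℕ → ℝ} {d : ℕ} (hc : ∀ m, |c m| ≤ (2 ^ m) ^ d) {δ : ℝ}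
    (hδ : 0 < δ) :
    GeometricallySmallOn {z | δ ≤ ‖z‖} fun i m z => c m • P i ((2 : ℝ) ^ m • z) where
  contDiff i m := ((P i).smooth ⊤ |>.comp (contDiff_const_smul _)).const_smul _
  norm_iteratedFDeriv_le k := by
    rw [(schwartz_withSeminorms ℝ E W).isVonNBounded_iff_seminorm_bounded] at hP
    -- `d + k` powers of `2 ^ m` are lost to `c m` and to the derivatives, one is gained
    obtain ⟨C, -, hC⟩ := hP (d + k + 1, k)
    refine ⟨C / δ ^ (d + k + 1), fun i m z hz => ?_⟩
    set t : ℝ := 2 ^ m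
    have ht : 0 < t := by positivity
    have hdecay : (t * δ) ^ (d + k + 1) * ‖iteratedFDeriv ℝ k (P i) (t • z)‖ ≤ C := by
      refine le_trans ?_ (((P i).le_seminorm ℝ _ _ (t • z)).trans
        (hC (P i) (Set.mem_range_self i)).le)
      gcongr
      rw [norm_smul, Real.norm_of_nonneg ht.le]
      gcongr
      exact hz
    have hderiv : iteratedFDeriv ℝ k (fun z => c m • P i (t • z)) z =
        (c m * t ^ k) • iteratedFDeriv ℝ k (P i) (t • z) := by
      have hPk : ContDiff ℝ k (P i) := (P i).smooth k
      have hPt : ContDiff ℝ k fun z => P i (t • z) := hPk.comp (contDiff_const_smul t)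
      rw [iteratedFDeriv_const_smul_apply' hPt.contDiffAt,
        iteratedFDeriv_comp_const_smul t hPk, smul_smul]
    rw [hderiv, norm_smul, Real.norm_eq_abs, abs_mul, abs_of_pos (pow_pos ht k), one_div_pow,
      div_mul_div_comm, mul_one, le_div_iff₀ (by positivity)]
    calc |c m| * t ^ k * ‖iteratedFDeriv ℝ k (P i) (t • z)‖ * (δ ^ (d + k + 1) * 2 ^ m)
        ≤ t ^ d * t ^ k * ‖iteratedFDeriv ℝ k (P i) (t • z)‖ * (δ ^ (d + k + 1) * t) := by
          gcongr
          exact hc m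
      _ = (t * δ) ^ (d + k + 1) * ‖iteratedFDeriv ℝ k (P i) (t • z)‖ := by ring
      _ ≤ C := hdecay

end GeometricDecay

section SmoothFamilies

variable {A V W : Type*} [NormedAddCommGroup A] [NormedSpace ℝ A]
  [NormedAddCommGroup V] [NormedSpace ℝ V] [NormedAddCommGroup W] [NormedSpace ℝ W]

lemma norm_iteratedFDeriv_slice_le {f : A × V → W} {a : A} {x : V} {k : ℕ}
    (hf : ContDiffAt ℝ k f (a, x)) :
    ‖iteratedFDeriv ℝ k (fun y => f (a, y)) x‖ ≤ ‖iteratedFDeriv ℝ k f (a, x)‖ := by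
  set ι : V →L[ℝ] A × V := ContinuousLinearMap.inr ℝ A V
  obtain ⟨u, hu, hfu⟩ := hf.contDiffOn le_rfl (by simp)
  obtain ⟨s, hsu, hs, hxs⟩ := _root_.mem_nhds_iff.1 hu
  set f' : A × V → W := fun p => f ((a, 0) + p)
  set s' : Set (A × V) := (fun p => (a, 0) + p) ⁻¹' s
  have hs' : IsOpen s' := hs.preimage (by fun_prop)
  have hf' : ContDiffOn ℝ k f' s' :=
    (hfu.mono hsu).comp (contDiff_const.add contDiff_id).contDiffOn fun _ h => h
  have hx : ι x ∈ s' := by simpa [s', ι] using hxs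
  have hcomp := ι.iteratedFDerivWithin_comp_right hf' hs'.uniqueDiffOn
    (hs'.preimage ι.continuous).uniqueDiffOn (x := x) hx le_rfl
  rw [iteratedFDerivWithin_of_isOpen k (hs'.preimage ι.continuous) hx,
    iteratedFDerivWithin_of_isOpen k hs' hx, iteratedFDeriv_comp_add_left] at hcomp
  calc ‖iteratedFDeriv ℝ k (fun y => f (a, y)) x‖
      = ‖iteratedFDeriv ℝ k (f' ∘ ι) x‖ := by simp [f', ι, Function.comp_def]
    _ ≤ ‖iteratedFDeriv ℝ k f ((a, 0) + ι x)‖ * ∏ _ : Fin k, ‖ι‖ := by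
        rw [hcomp]
        exact ContinuousMultilinearMap.norm_compContinuousLinearMap_le _ _
    _ ≤ ‖iteratedFDeriv ℝ k f ((a, 0) + ι x)‖ * 1 := by
        gcongr
        exact Finset.prod_le_one (fun _ _ => norm_nonneg _)
          fun _ _ => ContinuousLinearMap.norm_inr_le_one ℝ A V
    _ = ‖iteratedFDeriv ℝ k f (a, x)‖ := by simp [ι]

lemma exists_isVonNBounded_schwartz_family {Φ : A × V → W} {K : Set A} (hK : IsCompact K)
    {S : Set V} (hS : IsCompact S) (hΦ : ∀ a ∈ K, ∀ ξ, ContDiffAt ℝ ∞ Φ (a, ξ))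
    (hΦ_zero : ∀ a ∈ K, ∀ ξ ∉ S, Φ (a, ξ) = 0) :
    ∃ P : K → 𝓢(V, W), (∀ a ξ, P a ξ = Φ (a, ξ)) ∧ Bornology.IsVonNBounded ℝ (Set.range P) := by
  have hsmooth (a : K) : ContDiff ℝ ∞ fun ξ => Φ (a, ξ) :=
    contDiff_iff_contDiffAt.2 fun ξ => (hΦ a a.2 ξ).comp ξ (by fun_prop)
  have hsupp (a : K) : HasCompactSupport fun ξ => Φ (a, ξ) := .intro hS (hΦ_zero a a.2)
  refine ⟨fun a => (hsupp a).toSchwartzMap (hsmooth a), fun a ξ => rfl, ?_⟩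
  rw [(schwartz_withSeminorms ℝ V W).isVonNBounded_iff_seminorm_bounded]
  rintro ⟨k, j⟩
  obtain ⟨C, hC⟩ := (hK.prod hS).exists_bound_of_continuousOn
    (f := fun p : A × V => ‖p.2‖ ^ k * ‖iteratedFDeriv ℝ j Φ p‖) fun p hp =>
      ((continuous_snd.norm.pow k).continuousAt.mul ((hΦ p.1 hp.1 p.2).continuousAt_iteratedFDeriv
        (by exact_mod_cast le_top)).norm).continuousWithinAt
  refine ⟨max C 0 + 1, by positivity, ?_⟩
  rintro _ ⟨a, rfl⟩
  refine lt_of_le_of_lt (SchwartzMap.seminorm_le_bound ℝ k j _ (le_max_right C 0) fun ξ => ?_)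
    (lt_add_one _)
  change ‖ξ‖ ^ k * ‖iteratedFDeriv ℝ j (fun ξ => Φ (a, ξ)) ξ‖ ≤ max C 0
  by_cases hξ : ξ ∈ S
  · refine le_max_of_le_left (le_trans ?_ ((Real.le_norm_self _).trans (hC (a, ξ) ⟨a.2, hξ⟩)))
    gcongr
    exact norm_iteratedFDeriv_slice_le ((hΦ a a.2 ξ).of_le (by exact_mod_cast le_top))
  · have hξ' : ξ ∉ tsupport (iteratedFDeriv ℝ j fun ξ => Φ (a, ξ)) := fun h => hξ <|
      closure_minimal (Function.support_subset_iff'.2 (hΦ_zero a a.2)) hS.isClosed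
        (tsupport_iteratedFDeriv_subset j h)
    simp [image_eq_zero_of_notMem_tsupport hξ']

end SmoothFamilies

section Symbol

variable {n : ℕ} {F : Type*} [NormedAddCommGroup F] [InnerProductSpace ℝ F]

/-- The symbol `∑ i j, ξ i ξ j q i j` of the constant coefficient system
`∑ i j, ∂ᵢ∂ⱼ (q i j v) = 0`. The coefficients are operators on the target space, so no indices of
the target appear. -/
noncomputable def symbol (q : Fin n → Fin n → F →L[ℝ] F) (ξ : EuclideanSpace ℝ (Fin n)) :
    F →L[ℝ] F :=
  ∑ i, ∑ j, (ξ i * ξ j) • q i j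

/-- The strong Legendre–Hadamard condition with ellipticity constant `ℓ`. -/
def LegendreHadamard (ℓ : ℝ) (q : Fin n → Fin n → F →L[ℝ] F) : Prop :=
  ∀ ξ u, ℓ * ‖ξ‖ ^ 2 * ‖u‖ ^ 2 ≤ inner ℝ u (symbol q ξ u)

/-- The coefficient tensors of norm at most `L` satisfying the strong Legendre–Hadamard condition
with constant `ℓ`. -/
def ellipticCoefficients (n : ℕ) (F : Type*) [NormedAddCommGroup F] [InnerProductSpace ℝ F]
    (ℓ L : ℝ) : Set (Fin n → Fin n → F →L[ℝ] F) :=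
  {q | ‖q‖ ≤ L ∧ LegendreHadamard ℓ q}

lemma contDiff_symbol : ContDiff ℝ ∞
    fun p : (Fin n → Fin n → F →L[ℝ] F) × EuclideanSpace ℝ (Fin n) => symbol p.1 p.2 := by
  unfold symbol
  fun_prop

variable [FiniteDimensional ℝ F] {ℓ L : ℝ} {q : Fin n → Fin n → F →L[ℝ] F}

lemma isCompact_ellipticCoefficients (n : ℕ) (ℓ L : ℝ) :
    IsCompact (ellipticCoefficients n F ℓ L) := by
  have hclosed : IsClosed {q : Fin n → Fin n → F →L[ℝ] F | LegendreHadamard ℓ q} := by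
    simp only [LegendreHadamard, symbol, Set.ofPred_forall]
    exact isClosed_iInter fun ξ => isClosed_iInter fun u => isClosed_le (by fun_prop) (by fun_prop)
  refine isCompact_of_isClosed_isBounded ((isClosed_le continuous_norm continuous_const).inter
    hclosed) ((isBounded_closedBall (x := 0) (r := L)).subset fun q hq => ?_)
  simpa using hq.1

lemma LegendreHadamard.isUnit_symbol (hq : LegendreHadamard ℓ q) (hℓ : 0 < ℓ)
    {ξ : EuclideanSpace ℝ (Fin n)} (hξ : ξ ≠ 0) : IsUnit (symbol q ξ) := by
  have hinj : Function.Injective (symbol q ξ) := by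
    refine (injective_iff_map_eq_zero _).2 fun u hu => ?_
    have h := hq ξ u
    rw [hu, inner_zero_right] at h
    by_contra hu_ne
    have : 0 < ‖ξ‖ := norm_pos_iff.2 hξ
    have : 0 < ‖u‖ := norm_pos_iff.2 hu_ne
    exact absurd h (not_le.2 (by positivity))
  exact ContinuousLinearMap.isUnit_iff_bijective.2
    ⟨hinj, (LinearMap.injective_iff_surjective (f := (symbol q ξ).toLinearMap)).1 hinj⟩

lemma LegendreHadamard.contDiffAt_smul_inverse_symbol (hq : LegendreHadamard ℓ q) (hℓ : 0 < ℓ)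
    {ψ : EuclideanSpace ℝ (Fin n) → ℝ} (hψ : ContDiff ℝ ∞ ψ) (hψ_zero : ψ =ᶠ[nhds 0] 0)
    (ξ : EuclideanSpace ℝ (Fin n)) :
    ContDiffAt ℝ ∞ (fun p : (Fin n → Fin n → F →L[ℝ] F) × EuclideanSpace ℝ (Fin n) =>
      ψ p.2 • Ring.inverse (symbol p.1 p.2)) (q, ξ) := by
  rcases eq_or_ne ξ 0 with rfl | hξ
  · refine contDiffAt_const (c := 0) |>.congr_of_eventuallyEq ?_
    filter_upwards [continuous_snd.tendsto (q, (0 : EuclideanSpace ℝ (Fin n))) hψ_zero] with p hp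
    rw [show ψ p.2 = 0 from hp, zero_smul]
  · obtain ⟨s, hs⟩ := hq.isUnit_symbol hℓ hξ
    have hinv : ContDiffAt ℝ ∞ (Ring.inverse : (F →L[ℝ] F) → F →L[ℝ] F) (symbol q ξ) :=
      hs ▸ contDiffAt_ringInverse ℝ s
    have hinv_symbol : ContDiffAt ℝ ∞ (Ring.inverse ∘ fun p :
        (Fin n → Fin n → F →L[ℝ] F) × EuclideanSpace ℝ (Fin n) => symbol p.1 p.2) (q, ξ) :=
      hinv.comp (q, ξ) contDiff_symbol.contDiffAt
    exact (hψ.comp contDiff_snd).contDiffAt.smul hinv_symbol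

lemma LegendreHadamard.smul_inverse_mul_symbol (hq : LegendreHadamard ℓ q) (hℓ : 0 < ℓ)
    {ψ : EuclideanSpace ℝ (Fin n) → ℝ} (hψ_zero : ψ 0 = 0) (ξ : EuclideanSpace ℝ (Fin n)) :
    ψ ξ • Ring.inverse (symbol q ξ) * symbol q ξ = ψ ξ • 1 := by
  rcases eq_or_ne ξ 0 with rfl | hξ
  · simp [hψ_zero]
  · rw [smul_mul_assoc, Ring.inverse_mul_cancel _ (hq.isUnit_symbol hℓ hξ)]

end Symbol

section Parametrix

lemma lineDerivOp_lineDerivOp_apply {V W : Type*} [NormedAddCommGroup V] [NormedSpace ℝ V]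
    [NormedAddCommGroup W] [NormedSpace ℝ W] (f : 𝓢(V, W)) (v w z : V) :
    ∂_{w} (∂_{v} f) z = fderiv ℝ (fderiv ℝ f) z w v := by
  have hdiff : DifferentiableAt ℝ (fderiv ℝ f) z :=
    ((f.smooth 2).fderiv_right (m := 1) le_rfl).differentiable one_ne_zero z
  have hv : ((∂_{v} f : 𝓢(V, W)) : V → W) = fun y => fderiv ℝ f y v :=
    funext fun y => SchwartzMap.lineDerivOp_apply_eq_fderiv v f y
  rw [SchwartzMap.lineDerivOp_apply_eq_fderiv, hv, fderiv_clm_apply hdiff (by fun_prop)]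
  simp

lemma fderiv_const_smul_comp_add_smul {V W : Type*} [NormedAddCommGroup V] [NormedSpace ℝ V]
    [NormedAddCommGroup W] [NormedSpace ℝ W] (f : V → W) (c t : ℝ) (x : V) :
    fderiv ℝ (fun y => c • f (x + t • y)) = fun y => (c * t) • fderiv ℝ f (x + t • y) := by
  funext y
  have h := congrFun (fderiv_const_smul_field (𝕜 := ℝ) c (f := fun y => f (x + t • y))) y
  rw [Pi.smul_apply, fderiv_comp_smul t (f := fun y => f (x + y)), fderiv_comp_add_left,
    smul_smul] at h
  exact h

/-- The dilation of a function by `t` which preserves its integral. -/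
noncomputable def normalizedDilation {V : Type*} [NormedAddCommGroup V] [NormedSpace ℝ V]
    (t : ℝ) (X : V → ℝ) (z : V) : ℝ :=
  t ^ Module.finrank ℝ V * X (t • z)

lemma exists_schwartz_cutoff (V : Type*) [NormedAddCommGroup V] [InnerProductSpace ℝ V]
    [FiniteDimensional ℝ V] :
    ∃ χ : 𝓢(V, ℝ), HasCompactSupport χ ∧ χ =ᶠ[nhds 0] 1 := by
  let χ : ContDiffBump (0 : V) := ⟨1, 2, one_pos, one_lt_two⟩
  exact ⟨χ.hasCompactSupport.toSchwartzMap χ.contDiff, χ.hasCompactSupport, χ.eventuallyEq_one⟩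

lemma exists_annular_cutoff (V : Type*) [NormedAddCommGroup V] [InnerProductSpace ℝ V]
    [FiniteDimensional ℝ V] [MeasurableSpace V] [BorelSpace V] :
    ∃ X ψ : 𝓢(V, ℝ), ∫ z, X z = 1 ∧ HasCompactSupport ψ ∧ ψ =ᶠ[nhds 0] 0 ∧
      ∀ z, cosineTransform V ℝ ψ z = normalizedDilation 2 X z - X z := by
  obtain ⟨χ, hχ_supp, hχ_one⟩ := exists_schwartz_cutoff V
  let halve : V ≃L[ℝ] V := ContinuousLinearEquiv.smulLeft (Units.mk0 (2⁻¹ : ℝ) (by norm_num))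
  let χ₂ : 𝓢(V, ℝ) := SchwartzMap.compCLMOfContinuousLinearEquiv ℝ halve χ
  refine ⟨cosineTransform V ℝ χ, χ₂ - χ, ?_, ?_, ?_, fun z => ?_⟩
  · rw [integral_cosineTransform, hχ_one.eq_of_nhds, Pi.one_apply]
  · exact (hχ_supp.comp_homeomorph halve.toHomeomorph).sub hχ_supp
  · have hhalve : Filter.Tendsto halve (nhds 0) (nhds 0) := by
      simpa using halve.continuous.tendsto 0
    filter_upwards [hχ_one, hhalve.eventually hχ_one] with ξ h h'
    change χ (halve ξ) - χ ξ = 0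
    rw [h, h', Pi.one_apply, Pi.one_apply, sub_self]
  · rw [map_sub, sub_apply, cosineTransform_comp_inv_smul χ χ₂ two_pos fun ξ => rfl]
    rfl

variable {n : ℕ} {F : Type*} [NormedAddCommGroup F] [InnerProductSpace ℝ F]

/-- The second order operator `Φ ↦ ∑ i j, (∂ⱼ∂ᵢ Φ) ∘ q i j` on operator-valued maps. The
coefficients act from the right, so that `∫ (secondOrderOp q Φ) v = 0` is the weak form of the
system `∑ i j, ∂ᵢ∂ⱼ (q i j v) = 0`. -/
noncomputable def secondOrderOp (q : Fin n → Fin n → F →L[ℝ] F)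
    (Φ : EuclideanSpace ℝ (Fin n) → F →L[ℝ] F) (x : EuclideanSpace ℝ (Fin n)) : F →L[ℝ] F :=
  ∑ i, ∑ j, fderiv ℝ (fderiv ℝ Φ) x (EuclideanSpace.single j 1) (EuclideanSpace.single i 1) * q i j

lemma secondOrderOp_const_smul_comp_add_smul (q : Fin n → Fin n → F →L[ℝ] F)
    (Φ : EuclideanSpace ℝ (Fin n) → F →L[ℝ] F) (c t : ℝ) (x y : EuclideanSpace ℝ (Fin n)) :
    secondOrderOp q (fun y => c • Φ (x + t • y)) y =
      (c * t ^ 2) • secondOrderOp q Φ (x + t • y) := by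
  have hderiv₂ := fderiv_const_smul_comp_add_smul (fderiv ℝ Φ) (c * t) t x
  simp only [secondOrderOp, fderiv_const_smul_comp_add_smul Φ c t x, hderiv₂, Finset.smul_sum,
    smul_apply, smul_mul_assoc, mul_assoc, pow_two]

lemma secondOrderOp_eq_of_eventuallyEq (q : Fin n → Fin n → F →L[ℝ] F)
    {Φ Ψ : EuclideanSpace ℝ (Fin n) → F →L[ℝ] F} {x : EuclideanSpace ℝ (Fin n)}
    (h : Φ =ᶠ[nhds x] Ψ) : secondOrderOp q Φ x = secondOrderOp q Ψ x := by
  simp only [secondOrderOp, h.fderiv.fderiv_eq]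

lemma secondOrderOp_eq_zero_of_notMem_tsupport (q : Fin n → Fin n → F →L[ℝ] F)
    {Φ : EuclideanSpace ℝ (Fin n) → F →L[ℝ] F} {x : EuclideanSpace ℝ (Fin n)}
    (hx : x ∉ tsupport Φ) : secondOrderOp q Φ x = 0 := by
  rw [secondOrderOp_eq_of_eventuallyEq q (notMem_tsupport_iff_eventuallyEq.1 hx)]
  simp [secondOrderOp, Pi.zero_def]

set_option maxSynthPendingDepth 3 in
lemma GeometricallySmallOn.secondOrderOp {ι : Type*} {S : Set (EuclideanSpace ℝ (Fin n))}
    {Φ : ι → ℕ → EuclideanSpace ℝ (Fin n) → F →L[ℝ] F} (hΦ : GeometricallySmallOn S Φ)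
    {q : ι → Fin n → Fin n → F →L[ℝ] F} {L : ℝ} (hq : ∀ i, ‖q i‖ ≤ L) :
    GeometricallySmallOn S fun i m => secondOrderOp (q i) (Φ i m) := by
  let e (i : Fin n) : EuclideanSpace ℝ (Fin n) := EuclideanSpace.single i 1
  let contraction : (Fin n → Fin n → F →L[ℝ] F) →L[ℝ]
      ((EuclideanSpace ℝ (Fin n) →L[ℝ] EuclideanSpace ℝ (Fin n) →L[ℝ] (F →L[ℝ] F)) →L[ℝ]
        (F →L[ℝ] F)) :=
    ∑ i, ∑ j, (ContinuousLinearMap.mul ℝ (F →L[ℝ] F)).flip.bilinearComp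
      (ContinuousLinearMap.proj j ∘L ContinuousLinearMap.proj i)
      (ContinuousLinearMap.apply ℝ (F →L[ℝ] F) (e i) ∘L
        ContinuousLinearMap.apply ℝ (EuclideanSpace ℝ (Fin n) →L[ℝ] (F →L[ℝ] F)) (e j))
  convert hΦ.fderiv.fderiv.clm_apply contraction hq using 4 with i m z
  simp [contraction, e, _root_.secondOrderOp]

variable [FiniteDimensional ℝ F] {q : Fin n → Fin n → F →L[ℝ] F}

lemma secondOrderOp_cosineTransform (f g : 𝓢(EuclideanSpace ℝ (Fin n), F →L[ℝ] F))
    (hg : ∀ ξ, g ξ = -(4 * Real.pi ^ 2) • (f ξ * symbol q ξ)) :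
    secondOrderOp q (cosineTransform _ _ f) = cosineTransform _ _ g := by
  let e (i : Fin n) : EuclideanSpace ℝ (Fin n) := EuclideanSpace.single i 1
  let mult (i j : Fin n) (ξ : EuclideanSpace ℝ (Fin n)) : ℝ :=
    -(4 * Real.pi ^ 2) * (inner ℝ ξ (e i) * inner ℝ ξ (e j))
  have hmult (i j : Fin n) : (mult i j).HasTemperateGrowth := by fun_prop
  have hg_sum : g = ∑ i, ∑ j, (SchwartzMap.smulLeftCLM _ (mult i j) f).postcompCLM
      ((ContinuousLinearMap.mul ℝ (F →L[ℝ] F)).flip (q i j)) := by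
    ext1 ξ
    have hterm (i j : Fin n) : (SchwartzMap.smulLeftCLM _ (mult i j) f).postcompCLM
        ((ContinuousLinearMap.mul ℝ (F →L[ℝ] F)).flip (q i j)) ξ =
          -(4 * Real.pi ^ 2) • (f ξ * ((ξ i * ξ j) • q i j)) := by
      rw [SchwartzMap.postcompCLM_apply, SchwartzMap.smulLeftCLM_apply_apply (hmult i j),
        ContinuousLinearMap.flip_apply, ContinuousLinearMap.mul_apply', mul_smul_comm,
        smul_mul_assoc, smul_smul]
      simp [mult, e, EuclideanSpace.inner_single_right]
    simp only [hg, symbol, Finset.mul_sum, Finset.smul_sum, sum_apply, hterm]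
  funext z
  simp only [secondOrderOp, hg_sum, map_sum, cosineTransform_postcompCLM, sum_apply,
    SchwartzMap.postcompCLM_apply, mult, ← lineDerivOp_lineDerivOp_cosineTransform,
    lineDerivOp_lineDerivOp_apply, ContinuousLinearMap.flip_apply, ContinuousLinearMap.mul_apply',
    e]

/-- The symbol can only be inverted away from frequency `0`, which is why the right-hand side is a
difference of two dilates of an approximate identity rather than a single one. -/
lemma exists_dyadic_parametrix (n : ℕ) (F : Type*) [NormedAddCommGroup F] [InnerProductSpace ℝ F]
    [FiniteDimensional ℝ F] {ℓ : ℝ} (hℓ : 0 < ℓ) (L : ℝ) :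
    ∃ X : 𝓢(EuclideanSpace ℝ (Fin n), ℝ), ∫ z, X z = 1 ∧
      ∃ P : ellipticCoefficients n F ℓ L → 𝓢(EuclideanSpace ℝ (Fin n), F →L[ℝ] F),
        Bornology.IsVonNBounded ℝ (Set.range P) ∧
        ∀ q z, secondOrderOp q.1 (P q) z = (normalizedDilation 2 X z - X z) • 1 := by
  obtain ⟨X, ψ, hX, hψ_supp, hψ_zero, hψ⟩ := exists_annular_cutoff (EuclideanSpace ℝ (Fin n))
  let c : ℝ := -(4 * Real.pi ^ 2)
  have hc : c ≠ 0 := by simp [c, Real.pi_ne_zero]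
  obtain ⟨f, hf, hf_bdd⟩ := exists_isVonNBounded_schwartz_family
    (isCompact_ellipticCoefficients (F := F) n ℓ L) hψ_supp.isCompact
    (fun q hq ξ => (hq.2.contDiffAt_smul_inverse_symbol hℓ (ψ.smooth ⊤) hψ_zero ξ).const_smul c⁻¹)
    (fun q _ ξ hξ => by simp [image_eq_zero_of_notMem_tsupport hξ])
  refine ⟨X, hX, fun q => cosineTransform _ _ (f q), ?_, fun q z => ?_⟩
  · have himage := hf_bdd.image (cosineTransform (EuclideanSpace ℝ (Fin n)) (F →L[ℝ] F))
    rwa [← Set.range_comp] at himage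
  · have hsymbol (ξ : EuclideanSpace ℝ (Fin n)) :
        ψ.postcompCLM (ContinuousLinearMap.toSpanSingleton ℝ (1 : F →L[ℝ] F)) ξ =
          c • (f q ξ * symbol q ξ) := by
      rw [hf, smul_mul_assoc, smul_inv_smul₀ hc,
        q.2.2.smul_inverse_mul_symbol hℓ hψ_zero.eq_of_nhds]
      simp
    rw [secondOrderOp_cosineTransform _ _ hsymbol, cosineTransform_postcompCLM,
      SchwartzMap.postcompCLM_apply, hψ, ContinuousLinearMap.toSpanSingleton_apply]

end Parametrix

section TruncatedParametrix

variable {n : ℕ} {F : Type*} [NormedAddCommGroup F] [InnerProductSpace ℝ F]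

/-- The commutator of the second order operator with coefficients `q` and multiplication by `η`. -/
noncomputable def cutoffCommutator (q : Fin n → Fin n → F →L[ℝ] F)
    (η : EuclideanSpace ℝ (Fin n) → ℝ) (Φ : EuclideanSpace ℝ (Fin n) → F →L[ℝ] F)
    (z : EuclideanSpace ℝ (Fin n)) : F →L[ℝ] F :=
  η z • secondOrderOp q Φ z - secondOrderOp q (fun w => η w • Φ w) z

variable {q : Fin n → Fin n → F →L[ℝ] F} {η : EuclideanSpace ℝ (Fin n) → ℝ}

lemma cutoffCommutator_eventuallyEq_zero (Φ : EuclideanSpace ℝ (Fin n) → F →L[ℝ] F)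
    {z : EuclideanSpace ℝ (Fin n)} (hη : η =ᶠ[nhds z] 1) :
    cutoffCommutator q η Φ =ᶠ[nhds z] 0 := by
  filter_upwards [hη.eventuallyEq_nhds] with w hw
  have hΦ : (fun y => η y • Φ y) =ᶠ[nhds w] Φ := by
    filter_upwards [hw] with y hy
    rw [hy, Pi.one_apply, one_smul]
  rw [cutoffCommutator, secondOrderOp_eq_of_eventuallyEq q hΦ, hw.eq_of_nhds, Pi.one_apply,
    one_smul, sub_self, Pi.zero_apply]

lemma cutoffCommutator_eq_zero_of_notMem_tsupport (Φ : EuclideanSpace ℝ (Fin n) → F →L[ℝ] F)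
    {z : EuclideanSpace ℝ (Fin n)} (hz : z ∉ tsupport η) : cutoffCommutator q η Φ z = 0 := by
  have hΦ : z ∉ tsupport fun w => η w • Φ w := fun h => hz (tsupport_smul_subset_left η Φ h)
  rw [cutoffCommutator, secondOrderOp_eq_zero_of_notMem_tsupport q hΦ,
    image_eq_zero_of_notMem_tsupport hz, zero_smul, sub_zero]

lemma GeometricallySmallOn.cutoffCommutator {ι : Type*} {S : Set (EuclideanSpace ℝ (Fin n))}
    {Φ : ι → ℕ → EuclideanSpace ℝ (Fin n) → F →L[ℝ] F} (hΦ : GeometricallySmallOn S Φ)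
    {q : ι → Fin n → Fin n → F →L[ℝ] F} {L : ℝ} (hq : ∀ i, ‖q i‖ ≤ L)
    (hη : ContDiff ℝ ∞ η) (hη_supp : HasCompactSupport η) (hη_one : ∀ z ∉ S, η =ᶠ[nhds z] 1) :
    GeometricallySmallOn Set.univ fun i m => cutoffCommutator (q i) η (Φ i m) :=
  (((hΦ.secondOrderOp hq).smul_left hη hη_supp).sub
    ((hΦ.smul_left hη hη_supp).secondOrderOp hq)).of_eventuallyEq_zero
      fun i m z hz => cutoffCommutator_eventuallyEq_zero (Φ i m) (hη_one z hz)

lemma secondOrderOp_dyadic_dilation {X : EuclideanSpace ℝ (Fin n) → ℝ}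
    {P : EuclideanSpace ℝ (Fin n) → F →L[ℝ] F}
    (hP : ∀ z, secondOrderOp q P z = (normalizedDilation 2 X z - X z) • 1) (m : ℕ)
    (z : EuclideanSpace ℝ (Fin n)) :
    secondOrderOp q (fun y => ((2 : ℝ) ^ n / 4) ^ m • P ((2 : ℝ) ^ m • y)) z =
      (normalizedDilation (2 ^ (m + 1)) X z - normalizedDilation (2 ^ m) X z) • 1 := by
  have h := secondOrderOp_const_smul_comp_add_smul q P (((2 : ℝ) ^ n / 4) ^ m) (2 ^ m) 0 z
  have hfour : (4 : ℝ) ^ m = (2 ^ m) ^ 2 := by rw [← pow_mul, mul_comm, pow_mul]; norm_num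
  have hfactor : ((2 : ℝ) ^ n / 4) ^ m * (2 ^ m) ^ 2 = (2 ^ m) ^ n := by
    rw [div_pow, hfour, div_mul_cancel₀ _ (by positivity), ← pow_mul, ← pow_mul, mul_comm n]
  simp only [zero_add, hP, hfactor] at h
  rw [h, smul_smul]
  congr 1
  simp only [normalizedDilation, smul_smul, finrank_euclideanSpace_fin, pow_succ, mul_pow]
  ring_nf

lemma exists_truncated_parametrix (n : ℕ) (F : Type*) [NormedAddCommGroup F]
    [InnerProductSpace ℝ F] [FiniteDimensional ℝ F] {ℓ : ℝ} (hℓ : 0 < ℓ) (L : ℝ) :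
    ∃ X : 𝓢(EuclideanSpace ℝ (Fin n), ℝ), ∫ z, X z = 1 ∧
      ∃ η : EuclideanSpace ℝ (Fin n) → ℝ,
        ContDiff ℝ ∞ η ∧ η 0 = 1 ∧ tsupport η ⊆ closedBall 0 1 ∧
        ∃ κ : ellipticCoefficients n F ℓ L → ℕ → EuclideanSpace ℝ (Fin n) → F →L[ℝ] F,
          GeometricallySmallOn Set.univ κ ∧ (∀ q m, ∀ z ∉ closedBall 0 1, κ q m z = 0) ∧
          ∀ q m, ∃ Φ : EuclideanSpace ℝ (Fin n) → F →L[ℝ] F,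
            ContDiff ℝ ∞ Φ ∧ tsupport Φ ⊆ closedBall 0 1 ∧ ∀ z, secondOrderOp q.1 Φ z =
              (η z * (normalizedDilation (2 ^ (m + 1)) X z - normalizedDilation (2 ^ m) X z)) • 1 -
                κ q m z := by
  obtain ⟨X, hX, P, hP_bdd, hP⟩ := exists_dyadic_parametrix n F hℓ L
  let η : ContDiffBump (0 : EuclideanSpace ℝ (Fin n)) := ⟨1 / 2, 1, by norm_num, by norm_num⟩
  have hη_one : ∀ z ∉ {z : EuclideanSpace ℝ (Fin n) | 1 / 2 ≤ ‖z‖}, η =ᶠ[nhds z] 1 :=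
    fun z hz => η.eventuallyEq_one_of_mem_ball (mem_ball_zero_iff.2 (not_le.1 hz))
  let Φ (q : ellipticCoefficients n F ℓ L) (m : ℕ) (z : EuclideanSpace ℝ (Fin n)) : F →L[ℝ] F :=
    ((2 : ℝ) ^ n / 4) ^ m • P q ((2 : ℝ) ^ m • z)
  have hfactor (m : ℕ) : |((2 : ℝ) ^ n / 4) ^ m| ≤ (2 ^ m) ^ n := by
    rw [abs_of_nonneg (by positivity), ← pow_mul, mul_comm, pow_mul]
    gcongr
    exact div_le_self (by positivity) (by norm_num)
  have hΦ := geometricallySmallOn_dilation hP_bdd hfactor (one_half_pos (α := ℝ))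
  refine ⟨X, hX, η, η.contDiff, η.eventuallyEq_one.eq_of_nhds, η.tsupport_eq.subset,
    fun q m => cutoffCommutator q.1 η (Φ q m),
    hΦ.cutoffCommutator (fun q => q.2.1) η.contDiff η.hasCompactSupport hη_one,
    fun q m z hz => cutoffCommutator_eq_zero_of_notMem_tsupport _ (η.tsupport_eq ▸ hz),
    fun q m => ⟨fun z => η z • Φ q m z, η.contDiff.smul (hΦ.contDiff q m),
      (tsupport_smul_subset_left _ _).trans η.tsupport_eq.subset, fun z => ?_⟩⟩
  beta_reduce
  rw [cutoffCommutator, secondOrderOp_dyadic_dilation (hP q), smul_smul, sub_sub_cancel]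

end TruncatedParametrix

section ApproximateIdentity

open Filter

variable {V W : Type*} [NormedAddCommGroup V] [InnerProductSpace ℝ V] [FiniteDimensional ℝ V]
  [MeasurableSpace V] [BorelSpace V] [NormedAddCommGroup W] [NormedSpace ℝ W]

lemma integral_normalizedDilation_smul {t : ℝ} (ht : 0 < t) (X : V → ℝ) (h : V → W) :
    ∫ z, normalizedDilation t X z • h z = ∫ w, X w • h (t⁻¹ • w) := by
  have hvar := Measure.integral_comp_smul (volume : Measure V) (fun w => X w • h (t⁻¹ • w)) t
  rw [abs_of_pos (by positivity)] at hvar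
  rw [← inv_smul_smul₀ (pow_ne_zero (Module.finrank ℝ V) ht.ne') (∫ w, X w • h (t⁻¹ • w)),
    smul_comm, ← hvar, ← integral_smul]
  simp only [normalizedDilation, mul_smul, inv_smul_smul₀ ht.ne']

lemma norm_integral_normalizedDilation_smul_le {t : ℝ} (ht : 0 < t) {X : V → ℝ}
    (hX : Integrable X) {h : V → W} {B : ℝ} (hB : ∀ z, ‖h z‖ ≤ B) :
    ‖∫ z, normalizedDilation t X z • h z‖ ≤ (∫ w, ‖X w‖) * B := by
  rw [integral_normalizedDilation_smul ht, ← integral_mul_const]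
  refine norm_integral_le_of_norm_le (hX.norm.mul_const B) (.of_forall fun w => ?_)
  rw [norm_smul]
  gcongr
  exact hB _

lemma tendsto_integral_normalizedDilation_smul [CompleteSpace W] {t : ℕ → ℝ} (ht : ∀ m, 0 < t m)
    (ht_lim : Tendsto t atTop atTop) {X : V → ℝ} (hX : Integrable X) {h : V → W}
    (hh : Continuous h) {B : ℝ} (hB : ∀ z, ‖h z‖ ≤ B) :
    Tendsto (fun m => ∫ z, normalizedDilation (t m) X z • h z) atTop (nhds ((∫ w, X w) • h 0)) := by
  simp only [integral_normalizedDilation_smul (ht _)]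
  rw [← integral_smul_const]
  refine tendsto_integral_of_dominated_convergence (fun w => ‖X w‖ * B)
    (fun m => hX.aestronglyMeasurable.smul (by fun_prop)) (hX.norm.mul_const B)
    (fun m => .of_forall fun w => ?_) (.of_forall fun w => ?_)
  · rw [norm_smul]
    gcongr
    exact hB _
  · have hzero : Tendsto (fun m => (t m)⁻¹ • w) atTop (nhds 0) := by
      simpa using ht_lim.inv_tendsto_atTop.smul_const w
    exact ((hh.tendsto 0).comp hzero).const_smul (X w)

/-- Bounded continuous kernels, not necessarily positive, whose pairings with a test function
converge boundedly to the point evaluations of that function. -/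
structure IsApproximateIdentity (k : ℕ → V → ℝ) : Prop where
  continuous : ∀ m, Continuous (k m)
  exists_norm_le : ∀ m, ∃ b, ∀ z, ‖k m z‖ ≤ b
  exists_norm_integral_le : ∀ g : V → ℝ, Continuous g → HasCompactSupport g →
    ∃ B, ∀ m y, ‖∫ x, k m (x - y) * g x‖ ≤ B
  tendsto_integral : ∀ g : V → ℝ, Continuous g → HasCompactSupport g →
    ∀ y, Tendsto (fun m => ∫ x, k m (x - y) * g x) atTop (nhds (g y))

lemma isApproximateIdentity_mul_normalizedDilation {t : ℕ → ℝ} (ht : ∀ m, 0 < t m)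
    (ht_lim : Tendsto t atTop atTop) {X : 𝓢(V, ℝ)} (hX : ∫ w, X w = 1) {θ : V → ℝ}
    (hθ : Continuous θ) (hθ_supp : HasCompactSupport θ) (hθ_zero : θ 0 = 1) :
    IsApproximateIdentity fun m z => θ z * normalizedDilation (t m) X z := by
  have hcont (m : ℕ) : Continuous fun z => θ z * normalizedDilation (t m) X z := by
    unfold normalizedDilation
    fun_prop
  have hpairing (g : V → ℝ) (m : ℕ) (y : V) :
      ∫ x, θ (x - y) * normalizedDilation (t m) X (x - y) * g x =
        ∫ z, normalizedDilation (t m) X z • (θ z * g (z + y)) := by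
    rw [← integral_sub_right_eq_self (fun z => normalizedDilation (t m) X z • (θ z * g (z + y))) y]
    refine integral_congr_ae (.of_forall fun x => ?_)
    simp only [sub_add_cancel, smul_eq_mul]
    ring
  have hbound {g : V → ℝ} (hg : Continuous g) (hg_supp : HasCompactSupport g) :
      ∃ B, ∀ y z, ‖θ z * g (z + y)‖ ≤ B := by
    obtain ⟨b, hb⟩ := hθ_supp.exists_bound_of_continuous hθ
    obtain ⟨b', hb'⟩ := hg_supp.exists_bound_of_continuous hg
    exact ⟨b * b', fun y z => (norm_mul_le _ _).trans (mul_le_mul (hb z) (hb' _) (norm_nonneg _)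
      ((norm_nonneg _).trans (hb z)))⟩
  refine ⟨hcont, fun m => hθ_supp.mul_right.exists_bound_of_continuous (hcont m),
    fun g hg hg_supp => ?_, fun g hg hg_supp y => ?_⟩
  · obtain ⟨B, hB⟩ := hbound hg hg_supp
    refine ⟨(∫ w, ‖X w‖) * B, fun m y => ?_⟩
    rw [hpairing]
    exact norm_integral_normalizedDilation_smul_le (ht m) X.integrable (hB y)
  · obtain ⟨B, hB⟩ := hbound hg hg_supp
    simpa [hpairing, hX, hθ_zero] using tendsto_integral_normalizedDilation_smul ht ht_lim
      X.integrable (by fun_prop : Continuous fun z => θ z * g (z + y)) (hB y)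

lemma integrable_kernel_sub_mul_smul {k g : V → ℝ} {f : V → W} (hk : Continuous k) {b : ℝ}
    (hb : ∀ z, ‖k z‖ ≤ b) (hg : Integrable g) (hf : Integrable f) :
    Integrable (fun p : V × V => (k (p.1 - p.2) * g p.1) • f p.2) (volume.prod volume) := by
  simp only [mul_smul]
  exact (hg.smul_prod hf).bdd_smul b (φ := fun p : V × V => k (p.1 - p.2))
    (by fun_prop) (.of_forall fun p => hb _)

lemma IsApproximateIdentity.tendsto_integral_smul_integral [CompleteSpace W] {k : ℕ → V → ℝ}
    (hk : IsApproximateIdentity k) {f : V → W} (hf : Integrable f) {g : V → ℝ} (hg : Continuous g)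
    (hg_supp : HasCompactSupport g) :
    Tendsto (fun m => ∫ x, g x • ∫ y, k m (x - y) • f y) atTop (nhds (∫ y, g y • f y)) := by
  have hprod (m : ℕ) := (hk.exists_norm_le m).elim fun b hb => integrable_kernel_sub_mul_smul
    (hk.continuous m) hb (hg.integrable_of_hasCompactSupport hg_supp) hf
  have hswap (m : ℕ) : ∫ x, g x • ∫ y, k m (x - y) • f y =
      ∫ y, (∫ x, k m (x - y) * g x) • f y := by
    have h := integral_integral_swap (f := fun x y => (k m (x - y) * g x) • f y) (hprod m)
    simp only [integral_smul_const] at h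
    rw [← h]
    simp only [mul_comm (k m _), mul_smul, integral_smul]
  obtain ⟨B, hB⟩ := hk.exists_norm_integral_le g hg hg_supp
  simp only [hswap]
  refine tendsto_integral_of_dominated_convergence (fun y => B * ‖f y‖) (fun m => ?_)
    (hf.norm.const_mul B) (fun m => .of_forall fun y => ?_)
    (.of_forall fun y => (hk.tendsto_integral g hg hg_supp y).smul_const _)
  · simpa only [integral_smul_const] using (hprod m).integral_prod_right.aestronglyMeasurable
  · rw [norm_smul]
    gcongr
    exact hB m y

lemma IsApproximateIdentity.ae_eq_of_tendsto [CompleteSpace W] {k : ℕ → V → ℝ}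
    (hk : IsApproximateIdentity k) {f h : V → W} (hf : Integrable f) (hh : Continuous h)
    {U : Set V} (hU : IsOpen U)
    (hlim : ∀ x ∈ U, Tendsto (fun m => ∫ y, k m (x - y) • f y) atTop (nhds (h x)))
    {D : ℝ} (hD : ∀ m, ∀ x ∈ U, ‖∫ y, k m (x - y) • f y‖ ≤ D) :
    ∀ᵐ x, x ∈ U → f x = h x := by
  have hloc : LocallyIntegrableOn (f - h) U :=
    (hf.locallyIntegrable.sub hh.locallyIntegrable).locallyIntegrableOn U
  have hzero := hU.ae_eq_zero_of_integral_contDiff_smul_eq_zero hloc fun g hg hg_supp hgU => ?_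
  · filter_upwards [hzero] with x hx hxU
    exact sub_eq_zero.1 (hx hxU)
  have hg_int : Integrable g := hg.continuous.integrable_of_hasCompactSupport hg_supp
  have hgU_zero (x : V) (hx : x ∉ U) : g x = 0 :=
    image_eq_zero_of_notMem_tsupport fun h => hx (hgU h)
  have hlim_h : Tendsto (fun m => ∫ x, g x • ∫ y, k m (x - y) • f y) atTop
      (nhds (∫ x, g x • h x)) := by
    refine tendsto_integral_of_dominated_convergence (fun x => ‖g x‖ * D) (fun m => ?_)
      (hg_int.norm.mul_const D) (fun m => .of_forall fun x => ?_) (.of_forall fun x => ?_)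
    · obtain ⟨b, hb⟩ := hk.exists_norm_le m
      simpa only [mul_comm (k m _), mul_smul, integral_smul] using (integrable_kernel_sub_mul_smul
        (hk.continuous m) hb hg_int hf).integral_prod_left.aestronglyMeasurable
    · by_cases hx : x ∈ U
      · rw [norm_smul]
        gcongr
        exact hD m x hx
      · simp [hgU_zero x hx]
    · by_cases hx : x ∈ U
      · exact (hlim x hx).const_smul _
      · simp [hgU_zero x hx]
  have hgf : Integrable fun x => g x • f x :=
    hf.locallyIntegrable.integrable_smul_left_of_hasCompactSupport hg.continuous hg_supp
  have hgh : Integrable fun x => g x • h x :=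
    hh.locallyIntegrable.integrable_smul_left_of_hasCompactSupport hg.continuous hg_supp
  simp only [Pi.sub_apply, smul_sub]
  rw [integral_sub hgf hgh, sub_eq_zero]
  exact tendsto_nhds_unique (hk.tendsto_integral_smul_integral hf hg.continuous hg_supp) hlim_h

end ApproximateIdentity

section ReproducingKernel

open Filter

variable {n : ℕ} {F : Type*} [NormedAddCommGroup F] [InnerProductSpace ℝ F]
  {q : Fin n → Fin n → F →L[ℝ] F} {U : Set (EuclideanSpace ℝ (Fin n))} {r : ℝ}

lemma fderiv_fderiv_add {V W : Type*} [NormedAddCommGroup V] [NormedSpace ℝ V]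
    [NormedAddCommGroup W] [NormedSpace ℝ W] {f g : V → W} (hf : ContDiff ℝ 2 f)
    (hg : ContDiff ℝ 2 g) (x : V) :
    fderiv ℝ (fderiv ℝ (f + g)) x = fderiv ℝ (fderiv ℝ f) x + fderiv ℝ (fderiv ℝ g) x := by
  have hfg : fderiv ℝ (f + g) = fderiv ℝ f + fderiv ℝ g := funext fun y =>
    fderiv_add (hf.differentiable two_ne_zero y) (hg.differentiable two_ne_zero y)
  have hdiff {h : V → W} (hh : ContDiff ℝ 2 h) : DifferentiableAt ℝ (fderiv ℝ h) x :=
    (hh.fderiv_right (m := 1) le_rfl).differentiable one_ne_zero x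
  rw [hfg, fderiv_add (hdiff hf) (hdiff hg)]

lemma secondOrderOp_add {Φ Ψ : EuclideanSpace ℝ (Fin n) → F →L[ℝ] F} (hΦ : ContDiff ℝ 2 Φ)
    (hΨ : ContDiff ℝ 2 Ψ) (z : EuclideanSpace ℝ (Fin n)) :
    secondOrderOp q (Φ + Ψ) z = secondOrderOp q Φ z + secondOrderOp q Ψ z := by
  simp only [secondOrderOp, fderiv_fderiv_add hΦ hΨ, add_apply, add_mul, Finset.sum_add_distrib]

lemma exists_secondOrderOp_eq_sum_range {S : Set (EuclideanSpace ℝ (Fin n))}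
    {g : ℕ → EuclideanSpace ℝ (Fin n) → F →L[ℝ] F}
    (hg : ∀ k, ∃ Φ : EuclideanSpace ℝ (Fin n) → F →L[ℝ] F,
      ContDiff ℝ ∞ Φ ∧ tsupport Φ ⊆ S ∧ ∀ z, secondOrderOp q Φ z = g k z) (m : ℕ) :
    ∃ Φ : EuclideanSpace ℝ (Fin n) → F →L[ℝ] F,
      ContDiff ℝ ∞ Φ ∧ tsupport Φ ⊆ S ∧ ∀ z, secondOrderOp q Φ z = ∑ k ∈ Finset.range m, g k z := by
  induction m with
  | zero => exact ⟨0, contDiff_const, by simp, fun z => by simp [secondOrderOp, Pi.zero_def]⟩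
  | succ m ih =>
    obtain ⟨Φ, hΦ, hΦ_supp, hΦ_eq⟩ := ih
    obtain ⟨Ψ, hΨ, hΨ_supp, hΨ_eq⟩ := hg m
    refine ⟨Φ + Ψ, hΦ.add hΨ, (tsupport_add Φ Ψ).trans (Set.union_subset hΦ_supp hΨ_supp),
      fun z => ?_⟩
    have htwo : (2 : WithTop ℕ∞) ≤ ∞ := WithTop.coe_le_coe.2 le_top
    rw [secondOrderOp_add (hΦ.of_le htwo) (hΨ.of_le htwo), hΦ_eq, hΨ_eq, Finset.sum_range_succ]

/-- Smoothing remainders `S m`, bounded by `C` and convergent to `K`, for which `k m - S m` is the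
image under `secondOrderOp q` of a test map supported in the unit ball. -/
structure IsSmoothingRemainder (q : Fin n → Fin n → F →L[ℝ] F)
    (k : ℕ → EuclideanSpace ℝ (Fin n) → ℝ) (C : ℝ) (S : ℕ → EuclideanSpace ℝ (Fin n) → F →L[ℝ] F)
    (K : EuclideanSpace ℝ (Fin n) → F →L[ℝ] F) : Prop where
  continuous : ∀ m, Continuous (S m)
  norm_le : ∀ m z, ‖S m z‖ ≤ C
  contDiff_lim : ContDiff ℝ ∞ K
  lim_eq_zero : ∀ z ∉ closedBall 0 1, K z = 0
  tendsto : ∀ z, Tendsto (S · z) atTop (nhds (K z))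
  exists_secondOrderOp_eq : ∀ m, ∃ Φ : EuclideanSpace ℝ (Fin n) → F →L[ℝ] F, ContDiff ℝ ∞ Φ ∧
    tsupport Φ ⊆ closedBall 0 1 ∧ ∀ z, secondOrderOp q Φ z = k m z • 1 - S m z

lemma exists_isSmoothingRemainder (n : ℕ) (F : Type*) [NormedAddCommGroup F]
    [InnerProductSpace ℝ F] [FiniteDimensional ℝ F] {ℓ : ℝ} (hℓ : 0 < ℓ) (L : ℝ) :
    ∃ X : 𝓢(EuclideanSpace ℝ (Fin n), ℝ), ∫ z, X z = 1 ∧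
      ∃ η : EuclideanSpace ℝ (Fin n) → ℝ, Continuous η ∧ HasCompactSupport η ∧ η 0 = 1 ∧
        ∃ C, ∀ q ∈ ellipticCoefficients n F ℓ L, ∃ S K,
          IsSmoothingRemainder q (fun m z => η z * normalizedDilation (2 ^ m) X z) C S K := by
  obtain ⟨X, hX, η, hη, hη_zero, hη_supp, κ, hκ, hκ_supp, hstep⟩ :=
    exists_truncated_parametrix n F hℓ L
  have hη_compact : HasCompactSupport η :=
    (isCompact_closedBall 0 1).of_isClosed_subset (isClosed_tsupport η) hη_supp
  have hηX : ContDiff ℝ ∞ fun z => η z * X z := hη.mul (X.smooth ⊤)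
  obtain ⟨b, hb⟩ := hη_compact.mul_right.exists_bound_of_continuous hηX.continuous
  obtain ⟨B, hB⟩ := hκ.exists_norm_sum_range_le
  refine ⟨X, hX, η, hη.continuous, hη_compact, hη_zero, b * ‖(1 : F →L[ℝ] F)‖ + B, fun q hq => ?_⟩
  refine ⟨fun m z => (η z * X z) • 1 + ∑ k ∈ Finset.range m, κ ⟨q, hq⟩ k z,
    fun z => (η z * X z) • 1 + ∑' k, κ ⟨q, hq⟩ k z, fun m => ?_, fun m z => ?_,
    (hηX.smul contDiff_const).add (hκ.contDiff_tsum ⟨q, hq⟩), fun z hz => ?_,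
    fun z => (hκ.summable ⟨q, hq⟩ z).hasSum.tendsto_sum_nat.const_add _, fun m => ?_⟩
  · exact (hηX.continuous.smul continuous_const).add
      (continuous_finsetSum _ fun k _ => (hκ.contDiff ⟨q, hq⟩ k).continuous)
  · refine (norm_add_le _ _).trans (add_le_add ?_ (hB _ m z))
    rw [norm_smul]
    gcongr
    exact hb z
  · simp [image_eq_zero_of_notMem_tsupport fun h => hz (hη_supp h), hκ_supp _ _ z hz]
  · obtain ⟨Φ, hΦ, hΦ_supp, hΦ_eq⟩ := exists_secondOrderOp_eq_sum_range (hstep ⟨q, hq⟩) m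
    refine ⟨Φ, hΦ, hΦ_supp, fun z => ?_⟩
    rw [hΦ_eq, Finset.sum_sub_distrib, ← Finset.sum_smul, ← Finset.mul_sum,
      Finset.sum_range_sub fun k => normalizedDilation (2 ^ k) X z, mul_sub, sub_smul,
      sub_sub]
    simp [normalizedDilation]

/-- `f` solves the system `∑ i j, ∂ᵢ∂ⱼ (q i j f) = 0` on `U` in the sense of distributions. The
test maps are operator-valued, and the values of `f` outside `U` are irrelevant. -/
def IsVeryWeakSolution (q : Fin n → Fin n → F →L[ℝ] F) (U : Set (EuclideanSpace ℝ (Fin n)))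
    (f : EuclideanSpace ℝ (Fin n) → F) : Prop :=
  ∀ Φ : EuclideanSpace ℝ (Fin n) → F →L[ℝ] F, ContDiff ℝ ∞ Φ → HasCompactSupport Φ →
    tsupport Φ ⊆ U → ∫ x, secondOrderOp q Φ x (f x) = 0

namespace IsVeryWeakSolution

variable {f g : EuclideanSpace ℝ (Fin n) → F}

lemma mono_of_ae_eq {V : Set (EuclideanSpace ℝ (Fin n))} (hf : IsVeryWeakSolution q U f)
    (hVU : V ⊆ U) (hfg : ∀ᵐ x, x ∈ V → f x = g x) : IsVeryWeakSolution q V g := by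
  intro Φ hΦ hΦ_compact hΦ_supp
  rw [← hf Φ hΦ hΦ_compact (hΦ_supp.trans hVU)]
  refine integral_congr_ae ?_
  filter_upwards [hfg] with x hx
  by_cases hxV : x ∈ V
  · rw [hx hxV]
  · simp [secondOrderOp_eq_zero_of_notMem_tsupport q fun h => hxV (hΦ_supp h)]

lemma integral_dilation_eq_zero (hf : IsVeryWeakSolution q U f) (hr : 0 < r)
    {Φ : EuclideanSpace ℝ (Fin n) → F →L[ℝ] F} (hΦ : ContDiff ℝ ∞ Φ)
    (hΦ_supp : tsupport Φ ⊆ closedBall 0 1) {x : EuclideanSpace ℝ (Fin n)}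
    (hx : closedBall x r ⊆ U) : ∫ y, secondOrderOp q Φ (r⁻¹ • (x - y)) (f y) = 0 := by
  let Ψ (y : EuclideanSpace ℝ (Fin n)) : F →L[ℝ] F := r ^ 2 • Φ (r⁻¹ • x + (-r⁻¹) • y)
  have hΨ : ContDiff ℝ ∞ Ψ := (hΦ.comp (by fun_prop)).const_smul (r ^ 2)
  have hΨ_supp : tsupport Ψ ⊆ closedBall x r := by
    refine closure_minimal (fun y hy => ?_) isClosed_closedBall
    have hΦy : r⁻¹ • x + (-r⁻¹) • y ∈ closedBall 0 1 :=
      hΦ_supp (subset_tsupport _ fun h => hy (by simp only [Ψ, h, smul_zero]))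
    rw [neg_smul, ← sub_eq_add_neg, ← smul_sub, mem_closedBall_zero_iff, norm_smul, norm_inv,
      Real.norm_of_nonneg hr.le, inv_mul_le_one₀ hr] at hΦy
    rwa [mem_closedBall', dist_eq_norm]
  rw [← hf Ψ hΨ ((isCompact_closedBall x r).of_isClosed_subset (isClosed_tsupport Ψ) hΨ_supp)
    (hΨ_supp.trans hx)]
  refine integral_congr_ae (.of_forall fun y => ?_)
  have hscale : r ^ 2 * (-r⁻¹) ^ 2 = 1 := by field_simp
  simp only [Ψ, secondOrderOp_const_smul_comp_add_smul, hscale, one_smul]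
  rw [neg_smul, ← sub_eq_add_neg, ← smul_sub]

end IsVeryWeakSolution

/-- `K`, supported in the closed ball of radius `r`, reproduces under convolution the integrable
very weak solutions of `∑ i j, ∂ᵢ∂ⱼ (q i j f) = 0` on `U` at almost every point of any open set `O`
whose points have distance more than `r` to the complement of `U`. -/
structure IsReproducingKernel (q : Fin n → Fin n → F →L[ℝ] F) (r : ℝ)
    (K : EuclideanSpace ℝ (Fin n) → F →L[ℝ] F) : Prop where
  contDiff : ContDiff ℝ ∞ K
  eq_zero : ∀ z ∉ closedBall 0 r, K z = 0
  ae_eq_integral : ∀ (O U : Set (EuclideanSpace ℝ (Fin n))) (f : EuclideanSpace ℝ (Fin n) → F),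
    IsOpen O → (∀ x ∈ O, closedBall x r ⊆ U) → Integrable f → IsVeryWeakSolution q U f →
    ∀ᵐ x, x ∈ O → f x = ∫ y, K (x - y) (f y)

lemma normalizedDilation_mul {V : Type*} [NormedAddCommGroup V] [NormedSpace ℝ V] (s t : ℝ)
    (X : V → ℝ) (z : V) :
    normalizedDilation (s * t) X z =
      t ^ Module.finrank ℝ V * normalizedDilation s X (t • z) := by
  simp only [normalizedDilation, mul_smul, mul_pow]
  ring

lemma integrable_clm_apply {V G H : Type*} [MeasurableSpace V] [TopologicalSpace V]
    [OpensMeasurableSpace V] [SecondCountableTopology V] [NormedAddCommGroup G] [NormedSpace ℝ G]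
    [NormedAddCommGroup H] [NormedSpace ℝ H] {μ : Measure V} {A : V → G →L[ℝ] H}
    (hA : Continuous A) {C : ℝ} (hC : ∀ z, ‖A z‖ ≤ C) {f : V → G} (hf : Integrable f μ) :
    Integrable (fun y => A y (f y)) μ :=
  (ContinuousLinearMap.id ℝ (G →L[ℝ] H)).integrable_of_bilin_of_bdd_left C
    hA.aestronglyMeasurable (.of_forall hC) hf

lemma contDiff_integral_clm_sub {V G H : Type*} [NormedAddCommGroup V] [NormedSpace ℝ V]
    [FiniteDimensional ℝ V] [MeasurableSpace V] [BorelSpace V] {μ : Measure V}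
    [μ.IsAddHaarMeasure] [NormedAddCommGroup G] [NormedSpace ℝ G] [NormedAddCommGroup H]
    [NormedSpace ℝ H] {K : V → G →L[ℝ] H} (hK : ContDiff ℝ ∞ K) (hK_supp : HasCompactSupport K)
    {f : V → G} (hf : LocallyIntegrable f μ) :
    ContDiff ℝ ∞ fun x => ∫ y, K (x - y) (f y) ∂μ := by
  have hconv := hK_supp.contDiff_convolution_left (ContinuousLinearMap.id ℝ (G →L[ℝ] H)) hK hf
  have hswap (x : V) := convolution_eq_swap (f := K) (g := f) (x := x) (μ := μ)
    (ContinuousLinearMap.id ℝ (G →L[ℝ] H))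
  exact (funext hswap : _ = fun x => ∫ y, K (x - y) (f y) ∂μ) ▸ hconv

lemma IsVeryWeakSolution.integral_smul_eq_integral {f : EuclideanSpace ℝ (Fin n) → F}
    (hf : IsVeryWeakSolution q U f) (hf_int : Integrable f) (hr : 0 < r)
    {x : EuclideanSpace ℝ (Fin n)} (hx : closedBall x r ⊆ U)
    {k : EuclideanSpace ℝ (Fin n) → ℝ} (hk : Continuous k) {b : ℝ} (hb : ∀ z, ‖k z‖ ≤ b)
    {S Φ : EuclideanSpace ℝ (Fin n) → F →L[ℝ] F} (hS : Continuous S) {C : ℝ}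
    (hC : ∀ z, ‖S z‖ ≤ C) (hΦ : ContDiff ℝ ∞ Φ) (hΦ_supp : tsupport Φ ⊆ closedBall 0 1)
    (hΦ_eq : ∀ z, secondOrderOp q Φ z = k z • 1 - S z) :
    ∫ y, k (r⁻¹ • (x - y)) • f y = ∫ y, S (r⁻¹ • (x - y)) (f y) := by
  have hzero := hf.integral_dilation_eq_zero hr hΦ hΦ_supp hx
  simp only [hΦ_eq, sub_apply, smul_apply, one_apply_eq_self] at hzero
  rwa [integral_sub, sub_eq_zero] at hzero
  · exact hf_int.bdd_smul b (φ := fun y => k (r⁻¹ • (x - y)))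
      (by fun_prop) (.of_forall fun y => hb _)
  · exact integrable_clm_apply (A := fun y => S (r⁻¹ • (x - y))) (by fun_prop) (fun y => hC _)
      hf_int

namespace IsSmoothingRemainder

variable {k : ℕ → EuclideanSpace ℝ (Fin n) → ℝ} {C : ℝ}
  {S : ℕ → EuclideanSpace ℝ (Fin n) → F →L[ℝ] F} {K : EuclideanSpace ℝ (Fin n) → F →L[ℝ] F}
  {f : EuclideanSpace ℝ (Fin n) → F}

lemma norm_integral_le (hS : IsSmoothingRemainder q k C S K) (hf : Integrable f) (m : ℕ)
    (φ : EuclideanSpace ℝ (Fin n) → EuclideanSpace ℝ (Fin n)) :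
    ‖∫ y, S m (φ y) (f y)‖ ≤ ∫ y, C * ‖f y‖ :=
  norm_integral_le_of_norm_le (hf.norm.const_mul C) (.of_forall fun y =>
    (S m (φ y)).le_of_opNorm_le (hS.norm_le m _) _)

lemma tendsto_integral (hS : IsSmoothingRemainder q k C S K) (hf : Integrable f)
    {φ : EuclideanSpace ℝ (Fin n) → EuclideanSpace ℝ (Fin n)} (hφ : Continuous φ) :
    Tendsto (fun m => ∫ y, S m (φ y) (f y)) atTop (nhds (∫ y, K (φ y) (f y))) :=
  tendsto_integral_of_dominated_convergence (fun y => C * ‖f y‖)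
    (fun m => (integrable_clm_apply ((hS.continuous m).comp hφ) (fun y => hS.norm_le m (φ y))
      hf).aestronglyMeasurable)
    (hf.norm.const_mul C)
    (fun m => .of_forall fun y => (S m (φ y)).le_of_opNorm_le (hS.norm_le m _) _)
    (.of_forall fun y =>
      ((ContinuousLinearMap.apply ℝ F (f y)).continuous.tendsto _).comp (hS.tendsto (φ y)))

lemma norm_lim_le (hS : IsSmoothingRemainder q k C S K) (z : EuclideanSpace ℝ (Fin n)) :
    ‖K z‖ ≤ C :=
  le_of_tendsto (hS.tendsto z).norm (.of_forall fun m => hS.norm_le m z)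

variable {X : 𝓢(EuclideanSpace ℝ (Fin n), ℝ)} {η : EuclideanSpace ℝ (Fin n) → ℝ}

lemma integral_smul_eq (hS : IsSmoothingRemainder q
      (fun m z => η z * normalizedDilation (2 ^ m) X z) C S K)
    (hη : Continuous η) (hη_supp : HasCompactSupport η) (hf : Integrable f)
    (hf_sol : IsVeryWeakSolution q U f) (hr : 0 < r) {x : EuclideanSpace ℝ (Fin n)}
    (hx : closedBall x r ⊆ U) (m : ℕ) :
    ∫ y, (η (r⁻¹ • (x - y)) * normalizedDilation (2 ^ m * r⁻¹) X (x - y)) • f y =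
      r⁻¹ ^ n • ∫ y, S m (r⁻¹ • (x - y)) (f y) := by
  obtain ⟨Φ, hΦ, hΦ_supp, hΦ_eq⟩ := hS.exists_secondOrderOp_eq m
  have hcont : Continuous fun z => η z * normalizedDilation (2 ^ m) X z := by
    unfold normalizedDilation
    fun_prop
  obtain ⟨b, hb⟩ := hη_supp.mul_right.exists_bound_of_continuous hcont
  rw [← hf_sol.integral_smul_eq_integral hf hr hx hcont hb (hS.continuous m) (hS.norm_le m) hΦ
    hΦ_supp hΦ_eq, ← integral_smul]
  simp only [normalizedDilation_mul, finrank_euclideanSpace_fin, mul_left_comm, mul_smul]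

lemma isReproducingKernel [CompleteSpace F]
    (hS : IsSmoothingRemainder q (fun m z => η z * normalizedDilation (2 ^ m) X z) C S K)
    (hX : ∫ z, X z = 1) (hη : Continuous η) (hη_supp : HasCompactSupport η) (hη_zero : η 0 = 1)
    (hr : 0 < r) : IsReproducingKernel q r fun z => r⁻¹ ^ n • K (r⁻¹ • z) := by
  have hr_inv : 0 < r⁻¹ := inv_pos.2 hr
  have hK : ContDiff ℝ ∞ fun z => r⁻¹ ^ n • K (r⁻¹ • z) :=
    (hS.contDiff_lim.comp (by fun_prop)).const_smul (r⁻¹ ^ n)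
  have hK_zero : ∀ z ∉ closedBall 0 r, r⁻¹ ^ n • K (r⁻¹ • z) = 0 := fun z hz => by
    rw [hS.lim_eq_zero, smul_zero]
    rw [mem_closedBall_zero_iff] at hz ⊢
    rwa [norm_smul, Real.norm_of_nonneg hr_inv.le, inv_mul_le_one₀ hr]
  have hη_scaled : Continuous fun z => η (r⁻¹ • z) := by fun_prop
  have hk := isApproximateIdentity_mul_normalizedDilation (t := fun m => 2 ^ m * r⁻¹)
    (fun m => by positivity)
    ((tendsto_pow_atTop_atTop_of_one_lt one_lt_two).atTop_mul_const hr_inv) hX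
    hη_scaled (hη_supp.comp_smul hr_inv.ne') (by simpa using hη_zero)
  refine ⟨hK, hK_zero, fun O U f hO hOU hf hf_sol => ?_⟩
  refine hk.ae_eq_of_tendsto hf (contDiff_integral_clm_sub hK
    (.intro (isCompact_closedBall 0 r) hK_zero) hf.locallyIntegrable).continuous hO
    (fun x hx => ?_) (D := r⁻¹ ^ n * ∫ y, C * ‖f y‖) fun m x hx => ?_
  · simp only [hS.integral_smul_eq hη hη_supp hf hf_sol hr (hOU x hx), smul_apply, integral_smul]
    exact (hS.tendsto_integral hf (φ := fun y => r⁻¹ • (x - y)) (by fun_prop)).const_smul _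
  · rw [hS.integral_smul_eq hη hη_supp hf hf_sol hr (hOU x hx), norm_smul,
      Real.norm_of_nonneg (by positivity)]
    gcongr
    exact hS.norm_integral_le hf m _

end IsSmoothingRemainder

lemma exists_isReproducingKernel (n : ℕ) (F : Type*) [NormedAddCommGroup F]
    [InnerProductSpace ℝ F] [FiniteDimensional ℝ F] {ℓ : ℝ} (hℓ : 0 < ℓ) (L : ℝ) :
    ∃ C, ∀ q ∈ ellipticCoefficients n F ℓ L, ∀ r > 0,
      ∃ K, IsReproducingKernel q r K ∧ ∀ z, ‖K z‖ ≤ r⁻¹ ^ n * C := by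
  obtain ⟨X, hX, η, hη, hη_supp, hη_zero, C, hC⟩ := exists_isSmoothingRemainder n F hℓ L
  refine ⟨C, fun q hq r hr => ?_⟩
  obtain ⟨S, K, hS⟩ := hC q hq
  refine ⟨_, hS.isReproducingKernel hX hη hη_supp hη_zero hr, fun z => ?_⟩
  rw [norm_smul, Real.norm_of_nonneg (by positivity)]
  gcongr
  exact hS.norm_lim_le _

end ReproducingKernel

section InteriorRegularity

section

variable {V W : Type*} [NormedAddCommGroup V] [NormedSpace ℝ V] [NormedAddCommGroup W]
  [NormedSpace ℝ W] {Ω : Set V}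

lemma exists_contDiffOn_ae_eq_of_locally [SecondCountableTopology V] [MeasurableSpace V]
    [OpensMeasurableSpace V] {μ : Measure V} [μ.IsOpenPosMeasure] (hΩ : IsOpen Ω)
    {k : WithTop ℕ∞} {v : V → W}
    (h : ∀ x ∈ Ω, ∃ U w, IsOpen U ∧ x ∈ U ∧ ContDiff ℝ k w ∧ ∀ᵐ y ∂μ, y ∈ U → v y = w y) :
    ∃ u, ContDiffOn ℝ k u Ω ∧ ∀ᵐ x ∂μ, x ∈ Ω → v x = u x := by
  choose! U w hU hxU hw hvw using h
  have hw_eq (x) (hx : x ∈ Ω) (y) (hy : y ∈ Ω) (hyx : y ∈ U x) : w y y = w x y := by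
    have hUxy : IsOpen (U x ∩ U y) := (hU x hx).inter (hU y hy)
    have hae : w y =ᵐ[μ.restrict (U x ∩ U y)] w x := by
      rw [Filter.EventuallyEq, ae_restrict_iff' hUxy.measurableSet]
      filter_upwards [hvw x hx, hvw y hy] with z hzx hzy hz
      rw [← hzx hz.1, ← hzy hz.2]
    exact Measure.eqOn_open_of_ae_eq hae hUxy (hw y hy).continuous.continuousOn
      (hw x hx).continuous.continuousOn ⟨hyx, hxU y hy⟩
  refine ⟨fun x => w x x, fun x hx => ContDiffAt.contDiffWithinAt ?_, ?_⟩
  · refine (hw x hx).contDiffAt.congr_of_eventuallyEq ?_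
    filter_upwards [(hU x hx).mem_nhds (hxU x hx), hΩ.mem_nhds hx] with y hyU hyΩ
    exact hw_eq x hx y hyΩ hyU
  · refine measure_null_of_locally_null _ fun x hx => ?_
    have hxΩ : x ∈ Ω := (Classical.not_imp.1 hx).1
    refine ⟨_, Filter.inter_mem self_mem_nhdsWithin
      (mem_nhdsWithin_of_mem_nhds ((hU x hxΩ).mem_nhds (hxU x hxΩ))),
      measure_mono_null ?_ (ae_iff.1 (hvw x hxΩ))⟩
    rintro y ⟨hy, hyU⟩ hvwy
    refine hy fun hyΩ => ?_
    rw [hvwy hyU]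
    exact (hw_eq x hxΩ y hyΩ hyU).symm

lemma contDiff_smul_of_tsupport_subset {k : WithTop ℕ∞} {θ : V → ℝ} {u : V → W}
    (hθ : ContDiff ℝ k θ) (hΩ : IsOpen Ω) (hθΩ : tsupport θ ⊆ Ω) (hu : ContDiffOn ℝ k u Ω) :
    ContDiff ℝ k fun y => θ y • u y := by
  refine contDiff_iff_contDiffAt.2 fun y => ?_
  by_cases hy : y ∈ Ω
  · exact hθ.contDiffAt.smul (hu.contDiffAt (hΩ.mem_nhds hy))
  · refine (contDiffAt_const (c := (0 : W))).congr_of_eventuallyEq ?_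
    filter_upwards [notMem_tsupport_iff_eventuallyEq.1 fun h => hy (hθΩ h)] with z hz
    simp only [hz, Pi.zero_apply, zero_smul]

end

lemma norm_fderiv_integral_clm_sub_le {V G H : Type*} [NormedAddCommGroup V] [NormedSpace ℝ V]
    [FiniteDimensional ℝ V] [MeasurableSpace V] [BorelSpace V] {μ : Measure V}
    [μ.IsAddHaarMeasure] [NormedAddCommGroup G] [NormedSpace ℝ G] [NormedAddCommGroup H]
    [NormedSpace ℝ H] {K : V → G →L[ℝ] H} (hK : Continuous K) {r : ℝ}
    (hK_zero : ∀ z ∉ closedBall 0 r, K z = 0) {M : ℝ} (hM : ∀ z, ‖K z‖ ≤ M) {f : V → G}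
    (hf : ContDiff ℝ 1 f) (hf_supp : HasCompactSupport f) (x : V) :
    ‖fderiv ℝ (fun x => ∫ y, K (x - y) (f y) ∂μ) x‖ ≤
      M * ∫ y in closedBall x r, ‖fderiv ℝ f y‖ ∂μ := by
  have hconv := hf_supp.hasFDerivAt_convolution_right (ContinuousLinearMap.id ℝ (G →L[ℝ] H))
    (hK.locallyIntegrable (μ := μ)) hf x
  have hderiv : fderiv ℝ (fun x => ∫ y, K (x - y) (f y) ∂μ) x =
      ∫ y, (K (x - y)).comp (fderiv ℝ f y) ∂μ := by
    have hswap : convolution K f (ContinuousLinearMap.id ℝ (G →L[ℝ] H)) μ =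
        fun x => ∫ y, K (x - y) (f y) ∂μ := funext fun x => convolution_eq_swap _
    rw [← hswap, hconv.fderiv, convolution_eq_swap]
    rfl
  have hint : IntegrableOn (fun y => M * ‖fderiv ℝ f y‖) (closedBall x r) μ :=
    ((hf.continuous_fderiv one_ne_zero).norm.continuousOn.integrableOn_compact
      (isCompact_closedBall x r)).const_mul M
  rw [hderiv, ← integral_const_mul, ← integral_indicator measurableSet_closedBall]
  refine norm_integral_le_of_norm_le
    (hint.integrable_indicator measurableSet_closedBall) (.of_forall fun y => ?_)
  by_cases hy : y ∈ closedBall x r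
  · rw [Set.indicator_of_mem hy]
    exact (ContinuousLinearMap.opNorm_comp_le _ _).trans
      (mul_le_mul_of_nonneg_right (hM _) (norm_nonneg _))
  · rw [Set.indicator_of_notMem hy, hK_zero _ (by rwa [mem_closedBall_zero_iff, ← dist_eq_norm,
      ← mem_closedBall']), ContinuousLinearMap.zero_comp, norm_zero]

variable {n : ℕ} {F : Type*} [NormedAddCommGroup F] [InnerProductSpace ℝ F]
  {q : Fin n → Fin n → F →L[ℝ] F} {Ω : Set (EuclideanSpace ℝ (Fin n))}
  {u v : EuclideanSpace ℝ (Fin n) → F}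

lemma IsReproducingKernel.eventuallyEq_integral {r δ : ℝ} {x : EuclideanSpace ℝ (Fin n)}
    {K : EuclideanSpace ℝ (Fin n) → F →L[ℝ] F} (hK : IsReproducingKernel q r K) (hδ : 0 < δ)
    {f : EuclideanSpace ℝ (Fin n) → F} (hf : Continuous f) (hf_supp : HasCompactSupport f)
    (hf_sol : IsVeryWeakSolution q (closedBall x (r + δ)) f) :
    f =ᶠ[nhds x] fun x => ∫ y, K (x - y) (f y) := by
  have hsub (y) (hy : y ∈ ball x δ) : closedBall y r ⊆ closedBall x (r + δ) :=
    closedBall_subset_closedBall' (by gcongr; exact (mem_ball.1 hy).le)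
  have hf_int : Integrable f := hf.integrable_of_hasCompactSupport hf_supp
  have hae := hK.ae_eq_integral (ball x δ) _ f isOpen_ball hsub hf_int hf_sol
  have hcont : Continuous fun x => ∫ y, K (x - y) (f y) :=
    (contDiff_integral_clm_sub hK.contDiff (.intro (isCompact_closedBall 0 r) hK.eq_zero)
      hf_int.locallyIntegrable).continuous
  exact Filter.eventuallyEq_of_mem (ball_mem_nhds x hδ) <|
    Measure.eqOn_open_of_ae_eq ((ae_restrict_iff' measurableSet_ball).2 hae) isOpen_ball
      hf.continuousOn hcont.continuousOn

lemma IsReproducingKernel.norm_fderiv_le {r M : ℝ} {K : EuclideanSpace ℝ (Fin n) → F →L[ℝ] F}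
    (hK : IsReproducingKernel q r K) (hr : 0 ≤ r) (hM : ∀ z, ‖K z‖ ≤ M) (hΩ : IsOpen Ω)
    (hu : ContDiffOn ℝ ∞ u Ω) (hu_sol : IsVeryWeakSolution q Ω u) {x : EuclideanSpace ℝ (Fin n)}
    (hx : closedBall x r ⊆ Ω) :
    ‖fderiv ℝ u x‖ ≤ M * ∫ y in closedBall x r, ‖fderiv ℝ u y‖ := by
  obtain ⟨ε, hε, hεΩ⟩ := (isCompact_closedBall x r).exists_cthickening_subset_open hΩ hx
  rw [cthickening_closedBall hε.le hr] at hεΩ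
  let θ : ContDiffBump x := ⟨r + ε / 2, ε + r, by positivity, by linarith⟩
  let f (y : EuclideanSpace ℝ (Fin n)) : F := θ y • u y
  have hf : ContDiff ℝ ∞ f :=
    contDiff_smul_of_tsupport_subset θ.contDiff hΩ (θ.tsupport_eq.trans_subset hεΩ) hu
  have hf_supp : HasCompactSupport f := θ.hasCompactSupport.smul_right
  have hfu (y) (hy : y ∈ closedBall x (r + ε / 2)) : u y = f y := by
    simp only [f, θ.one_of_mem_closedBall hy, one_smul]
  have hfu_fderiv (y) (hy : y ∈ closedBall x r) : fderiv ℝ u y = fderiv ℝ f y :=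
    Filter.EventuallyEq.fderiv_eq <| Filter.eventuallyEq_of_mem
      (isOpen_ball.mem_nhds (closedBall_subset_ball (by linarith) hy))
      fun z hz => hfu z (ball_subset_closedBall hz)
  have hf_sol : IsVeryWeakSolution q (closedBall x (r + ε / 2)) f :=
    hu_sol.mono_of_ae_eq ((closedBall_subset_closedBall (by linarith)).trans hεΩ) (.of_forall hfu)
  have hf_conv := hK.eventuallyEq_integral (half_pos hε) hf.continuous hf_supp hf_sol
  rw [hfu_fderiv x (mem_closedBall_self hr), hf_conv.fderiv_eq,
    setIntegral_congr_fun measurableSet_closedBall fun y hy => congrArg norm (hfu_fderiv y hy)]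
  exact norm_fderiv_integral_clm_sub_le hK.contDiff.continuous hK.eq_zero hM
    (hf.of_le (WithTop.coe_le_coe.2 le_top)) hf_supp x

lemma IsVeryWeakSolution.exists_contDiffOn_ae_eq (hv_sol : IsVeryWeakSolution q Ω v)
    (hΩ : IsOpen Ω) (hv : LocallyIntegrableOn v Ω)
    (hq : ∀ r > 0, ∃ K, IsReproducingKernel q r K) :
    ∃ u, ContDiffOn ℝ ∞ u Ω ∧ ∀ᵐ x, x ∈ Ω → v x = u x := by
  refine exists_contDiffOn_ae_eq_of_locally hΩ fun x hx => ?_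
  obtain ⟨ε, hε, hεΩ⟩ := nhds_basis_closedBall.mem_iff.1 (hΩ.mem_nhds hx)
  obtain ⟨K, hK⟩ := hq (ε / 2) (half_pos hε)
  let f := (closedBall x ε).indicator v
  have hvf (y) (hy : y ∈ closedBall x ε) : v y = f y := (Set.indicator_of_mem hy v).symm
  have hf : Integrable f :=
    (hv.integrableOn_compact_subset hεΩ (isCompact_closedBall x ε)).integrable_indicator
      measurableSet_closedBall
  have hsub (y) (hy : y ∈ ball x (ε / 2)) : closedBall y (ε / 2) ⊆ closedBall x ε :=
    closedBall_subset_closedBall' (by linarith [mem_ball.1 hy])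
  refine ⟨ball x (ε / 2), fun y => ∫ z, K (y - z) (f z), isOpen_ball, mem_ball_self (half_pos hε),
    contDiff_integral_clm_sub hK.contDiff (.intro (isCompact_closedBall 0 _) hK.eq_zero)
      hf.locallyIntegrable, ?_⟩
  filter_upwards [hK.ae_eq_integral _ _ f isOpen_ball hsub hf
    (hv_sol.mono_of_ae_eq hεΩ (.of_forall hvf))] with y hy hyx
  rw [hvf y (hsub y hyx (mem_closedBall_self (half_pos hε).le)), hy hyx]

lemma exists_norm_fderiv_le_of_isVeryWeakSolution (n : ℕ) (F : Type*) [NormedAddCommGroup F]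
    [InnerProductSpace ℝ F] [FiniteDimensional ℝ F] {ℓ : ℝ} (hℓ : 0 < ℓ) (L : ℝ) :
    ∃ c : ℝ, 0 < c ∧ ∀ q ∈ ellipticCoefficients n F ℓ L,
      ∀ (Ω : Set (EuclideanSpace ℝ (Fin n))) (v : EuclideanSpace ℝ (Fin n) → F), IsOpen Ω →
        LocallyIntegrableOn v Ω → IsVeryWeakSolution q Ω v →
        ∃ u, ContDiffOn ℝ ∞ u Ω ∧ (∀ᵐ x, x ∈ Ω → v x = u x) ∧
          ∀ x₀ R, 0 < R → closedBall x₀ R ⊆ Ω → ∀ x ∈ ball x₀ (R / 2),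
            ‖fderiv ℝ u x‖ ≤ c / R ^ n * ∫ y in ball x₀ R, ‖fderiv ℝ u y‖ := by
  obtain ⟨C, hC⟩ := exists_isReproducingKernel n F hℓ L
  refine ⟨2 ^ n * (|C| + 1), by positivity, fun q hq Ω v hΩ hv hv_sol => ?_⟩
  obtain ⟨u, hu, hvu⟩ := hv_sol.exists_contDiffOn_ae_eq hΩ hv fun r hr => (hC q hq r hr).imp
    fun _ hK => hK.1
  refine ⟨u, hu, hvu, fun x₀ R hR hRΩ x hx => ?_⟩
  obtain ⟨K, hK, hKC⟩ := hC q hq (R / 2) (half_pos hR)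
  have hsub : closedBall x (R / 2) ⊆ ball x₀ R :=
    closedBall_subset_ball' (by linarith [mem_ball.1 hx])
  have hint : IntegrableOn (fun y => ‖fderiv ℝ u y‖) (ball x₀ R) :=
    (((hu.continuousOn_fderiv_of_isOpen hΩ (by simp)).mono hRΩ).norm.integrableOn_compact
      (isCompact_closedBall x₀ R)).mono_set ball_subset_closedBall
  calc ‖fderiv ℝ u x‖
      ≤ (R / 2)⁻¹ ^ n * C * ∫ y in closedBall x (R / 2), ‖fderiv ℝ u y‖ :=
        hK.norm_fderiv_le (half_pos hR).le hKC hΩ hu (hv_sol.mono_of_ae_eq subset_rfl hvu)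
          (hsub.trans (ball_subset_closedBall.trans hRΩ))
    _ ≤ (R / 2)⁻¹ ^ n * (|C| + 1) * ∫ y in ball x₀ R, ‖fderiv ℝ u y‖ := by
        gcongr ?_ * ?_ * ?_
        · linarith [le_abs_self C]
        · exact setIntegral_mono_set hint (.of_forall fun _ => norm_nonneg _) hsub.eventuallyLE
    _ = 2 ^ n * (|C| + 1) / R ^ n * ∫ y in ball x₀ R, ‖fderiv ℝ u y‖ := by
        rw [inv_div, div_pow, div_mul_eq_mul_div]

end InteriorRegularity

section Coordinates

lemma fderiv_fderiv_clm_comp {V W W' : Type*} [NormedAddCommGroup V] [NormedSpace ℝ V]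
    [NormedAddCommGroup W] [NormedSpace ℝ W] [NormedAddCommGroup W'] [NormedSpace ℝ W']
    (T : W →L[ℝ] W') {f : V → W} (hf : ContDiff ℝ 2 f) (x v w : V) :
    fderiv ℝ (fderiv ℝ fun y => T (f y)) x w v = T (fderiv ℝ (fderiv ℝ f) x w v) := by
  have hf' : DifferentiableAt ℝ (fderiv ℝ f) x :=
    (hf.fderiv_right (m := 1) le_rfl).differentiable one_ne_zero x
  have hTf : (fderiv ℝ fun y => T (f y)) = fun y => T.comp (fderiv ℝ f y) := funext fun y =>
    (T.hasFDerivAt.comp y (hf.differentiable two_ne_zero y).hasFDerivAt).fderiv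
  have hderiv := ((ContinuousLinearMap.compL ℝ V W W' T).hasFDerivAt.comp x hf'.hasFDerivAt).fderiv
  exact hTf ▸ DFunLike.congr_fun (DFunLike.congr_fun hderiv w) v

lemma exists_clm_inner_eq_inner_apply {F G : Type*} [NormedAddCommGroup F]
    [InnerProductSpace ℝ F] [CompleteSpace F] [NormedAddCommGroup G] [InnerProductSpace ℝ G]
    [CompleteSpace G] (w : G) :
    ∃ T : (F →L[ℝ] G) →L[ℝ] F, ∀ A u, inner ℝ (T A) u = inner ℝ w (A u) := by
  refine ⟨LinearMap.mkContinuous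
    { toFun A := ContinuousLinearMap.adjoint A w
      map_add' A B := by simp only [map_add, add_apply]
      map_smul' c A := by simp } ‖w‖ fun A => ?_, fun A u => A.adjoint_inner_left u w⟩
  rw [mul_comm, ← LinearIsometryEquiv.norm_map ContinuousLinearMap.adjoint A]
  exact (ContinuousLinearMap.adjoint A).le_opNorm w

/-- It suffices to test with vector-valued maps: the `w`-component of the weak equation tested with
`Φ` is the one tested with `x ↦ (Φ x)† w`. -/
lemma isVeryWeakSolution_of_forall_integral_inner_eq_zero {n : ℕ} {F : Type*}
    [NormedAddCommGroup F] [InnerProductSpace ℝ F] [CompleteSpace F]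
    {q : Fin n → Fin n → F →L[ℝ] F} {U : Set (EuclideanSpace ℝ (Fin n))}
    {f : EuclideanSpace ℝ (Fin n) → F}
    (hf : ∀ φ : EuclideanSpace ℝ (Fin n) → F, ContDiff ℝ ∞ φ → HasCompactSupport φ →
      tsupport φ ⊆ U → ∫ x in U, ∑ i, ∑ j, inner ℝ (fderiv ℝ (fderiv ℝ φ) x
        (EuclideanSpace.single j 1) (EuclideanSpace.single i 1)) (q i j (f x)) = 0) :
    IsVeryWeakSolution q U f := by
  intro Φ hΦ hΦ_compact hΦ_supp
  by_cases hint : Integrable fun x => secondOrderOp q Φ x (f x)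
  · refine ext_inner_left ℝ fun w => ?_
    obtain ⟨T, hT⟩ := exists_clm_inner_eq_inner_apply (F := F) w
    have hTΦ_supp : tsupport (fun x => T (Φ x)) ⊆ tsupport Φ := tsupport_comp_subset (map_zero T) Φ
    have hinner (x : EuclideanSpace ℝ (Fin n)) : inner ℝ w (secondOrderOp q Φ x (f x)) =
        ∑ i, ∑ j, inner ℝ (fderiv ℝ (fderiv ℝ fun y => T (Φ y)) x
          (EuclideanSpace.single j 1) (EuclideanSpace.single i 1)) (q i j (f x)) := by
      simp only [fderiv_fderiv_clm_comp T (hΦ.of_le (WithTop.coe_le_coe.2 le_top)), hT,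
        secondOrderOp, sum_apply, inner_sum, mul_apply_eq_comp]
    rw [inner_zero_right, ← integral_inner hint, ← hf (fun x => T (Φ x)) (T.contDiff.comp hΦ)
      (hΦ_compact.comp_left (map_zero T)) (hTΦ_supp.trans hΦ_supp)]
    simp only [← hinner]
    refine (setIntegral_eq_integral_of_forall_compl_eq_zero fun x hx => ?_).symm
    simp [secondOrderOp_eq_zero_of_notMem_tsupport q fun h => hx (hΦ_supp h)]
  · exact integral_undef hint

variable {n N : ℕ} {Q : Fin n → Fin n → Fin N → Fin N → ℝ}

/-- The coefficients `Q i j α β` as operators `q i j` on the target space. The index `α` is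
contracted with the solution and `β` is free, hence the transpose. -/
noncomputable def tensorOperator (Q : Fin n → Fin n → Fin N → Fin N → ℝ) (i j : Fin n) :
    EuclideanSpace ℝ (Fin N) →L[ℝ] EuclideanSpace ℝ (Fin N) :=
  Matrix.toEuclideanCLM (𝕜 := ℝ) (Matrix.of (Q i j)).transpose

lemma inner_tensorOperator (i j : Fin n) (w u : EuclideanSpace ℝ (Fin N)) :
    inner ℝ w (tensorOperator Q i j u) = ∑ a, ∑ b, u a * Q i j a b * w b := by
  rw [tensorOperator, Matrix.inner_toEuclideanCLM, Finset.sum_comm]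
  simp only [dotProduct, Matrix.mulVec, Matrix.transpose_apply, Matrix.of_apply, Finset.mul_sum]
  exact Finset.sum_congr rfl fun b _ => Finset.sum_congr rfl fun a _ => by ring

lemma continuous_tensorOperator :
    Continuous (tensorOperator : (Fin n → Fin n → Fin N → Fin N → ℝ) → _) := by
  have hCLM : Continuous fun A : Matrix (Fin N) (Fin N) ℝ => Matrix.toEuclideanCLM (𝕜 := ℝ) A :=
    LinearMap.continuous_of_finiteDimensional
      (Matrix.toEuclideanCLM (n := Fin N) (𝕜 := ℝ)).toAlgEquiv.toLinearMap
  refine continuous_pi fun i => continuous_pi fun j => hCLM.comp ?_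
  exact Continuous.matrix_transpose (by fun_prop)

lemma exists_norm_tensorOperator_le (n N : ℕ) (L : ℝ) :
    ∃ B, ∀ Q : Fin n → Fin n → Fin N → Fin N → ℝ, (∀ i j a b, |Q i j a b| ≤ L) →
      ‖tensorOperator Q‖ ≤ B := by
  obtain ⟨B, hB⟩ := (isCompact_closedBall (0 : Fin n → Fin n → Fin N → Fin N → ℝ)
    |L|).exists_bound_of_continuousOn continuous_tensorOperator.continuousOn
  refine ⟨B, fun Q hQ => hB Q ?_⟩
  simp only [mem_closedBall_zero_iff, pi_norm_le_iff_of_nonneg (abs_nonneg L), Real.norm_eq_abs]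
  exact fun i j a b => (hQ i j a b).trans (le_abs_self L)

lemma legendreHadamard_tensorOperator {ℓ : ℝ}
    (hQ : ∀ (ξ : Fin n → ℝ) (μ : Fin N → ℝ), ℓ * (∑ i, ξ i ^ 2) * (∑ a, μ a ^ 2) ≤
      ∑ i, ∑ j, ∑ a, ∑ b, Q i j a b * ξ i * ξ j * μ a * μ b) :
    LegendreHadamard ℓ (tensorOperator Q) := by
  intro ξ u
  rw [EuclideanSpace.real_norm_sq_eq, EuclideanSpace.real_norm_sq_eq]
  refine (hQ ξ u).trans_eq ?_
  simp only [symbol, sum_apply, smul_apply, inner_sum, inner_smul_right, inner_tensorOperator,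
    Finset.mul_sum]
  congr! 4
  ring

lemma isVeryWeakSolution_tensorOperator {Ω : Set (EuclideanSpace ℝ (Fin n))}
    {v : EuclideanSpace ℝ (Fin n) → EuclideanSpace ℝ (Fin N)}
    (hv : ∀ φ : EuclideanSpace ℝ (Fin n) → EuclideanSpace ℝ (Fin N),
      ContDiff ℝ ∞ φ → HasCompactSupport φ → tsupport φ ⊆ Ω →
      ∫ x in Ω, ∑ i, ∑ j, ∑ a, ∑ b, v x a * Q i j a b *
        fderiv ℝ (fun y => fderiv ℝ φ y (EuclideanSpace.single i 1) b) x
          (EuclideanSpace.single j 1) = 0) :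
    IsVeryWeakSolution (tensorOperator Q) Ω v := by
  refine isVeryWeakSolution_of_forall_integral_inner_eq_zero fun φ hφ hφ_compact hφ_supp => ?_
  rw [← hv φ hφ hφ_compact hφ_supp]
  have hcoord (x) (i j : Fin n) (b : Fin N) :
      fderiv ℝ (fun y => fderiv ℝ φ y (EuclideanSpace.single i 1) b) x (EuclideanSpace.single j 1) =
        fderiv ℝ (fderiv ℝ φ) x (EuclideanSpace.single j 1) (EuclideanSpace.single i 1) b := by
    have hφ' : DifferentiableAt ℝ (fderiv ℝ φ) x :=
      (hφ.fderiv_right (m := 1) (WithTop.coe_le_coe.2 le_top)).differentiable one_ne_zero x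
    let T := (EuclideanSpace.proj (𝕜 := ℝ) b).comp
      (ContinuousLinearMap.apply ℝ (EuclideanSpace ℝ (Fin N)) (EuclideanSpace.single i (1 : ℝ)))
    exact DFunLike.congr_fun (T.hasFDerivAt.comp x hφ'.hasFDerivAt).fderiv _
  simp only [inner_tensorOperator, hcoord]

end Coordinates

theorem stmt_10 (n N : ℕ) (hn : 1 ≤ n) (hN : 1 ≤ N) (ℓ L : ℝ) (hℓ : 0 < ℓ) (hℓL : ℓ ≤ L) :
    ∃ c : ℝ, 0 < c ∧
      ∀ (Ω : Set (EuclideanSpace ℝ (Fin n))) (Q : Fin n → Fin n → Fin N → Fin N → ℝ)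
        (v : EuclideanSpace ℝ (Fin n) → EuclideanSpace ℝ (Fin N)),
        IsOpen Ω →
        (∀ i j a b, |Q i j a b| ≤ L) →
        (∀ (lam : Fin n → ℝ) (μ : Fin N → ℝ),
          ℓ * (∑ i, lam i ^ 2) * (∑ a, μ a ^ 2) ≤
            ∑ i, ∑ j, ∑ a, ∑ b, Q i j a b * lam i * lam j * μ a * μ b) →
        LocallyIntegrableOn v Ω →
        (∀ φ : EuclideanSpace ℝ (Fin n) → EuclideanSpace ℝ (Fin N),
          ContDiff ℝ (⊤ : ℕ∞) φ → HasCompactSupport φ → tsupport φ ⊆ Ω →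
          ∫ x in Ω, ∑ i, ∑ j, ∑ a, ∑ b,
            v x a * Q i j a b *
              fderiv ℝ (fun y => fderiv ℝ φ y (EuclideanSpace.single i 1) b) x
                (EuclideanSpace.single j 1) = 0) →
        ∃ vt : EuclideanSpace ℝ (Fin n) → EuclideanSpace ℝ (Fin N),
          ContDiffOn ℝ (⊤ : ℕ∞) vt Ω ∧ (∀ᵐ x ∂volume.restrict Ω, v x = vt x) ∧
          ∀ (x₀ : EuclideanSpace ℝ (Fin n)) (R : ℝ), 0 < R → closedBall x₀ R ⊆ Ω →
            ∀ x ∈ ball x₀ (R / 2),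
              ‖fderiv ℝ vt x‖ ≤ c / R ^ n * ∫ y in ball x₀ R, ‖fderiv ℝ vt y‖ := by
  obtain ⟨B, hB⟩ := exists_norm_tensorOperator_le n N L
  obtain ⟨c, hc, hreg⟩ :=
    exists_norm_fderiv_le_of_isVeryWeakSolution n (EuclideanSpace ℝ (Fin N)) hℓ B
  refine ⟨c, hc, fun Ω Q v hΩ hQL hQ hv_int hv => ?_⟩
  have hq : tensorOperator Q ∈ ellipticCoefficients n (EuclideanSpace ℝ (Fin N)) ℓ B :=
    ⟨hB Q hQL, legendreHadamard_tensorOperator hQ⟩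
  obtain ⟨vt, hvt, hae, hgrad⟩ :=
    hreg _ hq Ω v hΩ hv_int (isVeryWeakSolution_tensorOperator hv)
  exact ⟨vt, hvt, (ae_restrict_iff' hΩ.measurableSet).2 hae, hgrad⟩
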